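/- arXiv:2109.06369 — 2 statements merged into one kernel-verified Lean document; each statement's English description precedes it below -/
import Mathlib

section
/- Let X = (x_{ij}) be an m×n totally positive real matrix, let 1 ≤ k ≤ m−1, let T be the Γ-scaffolding of X, let T̂ be the k×n matrix consisting of the first k rows of T, and let X̂ = X_Γ(T̂). Suppose r, q, s ∈ ℝⁿ are strongly positive vectors satisfying, for every j ∈ [n]: (A) Σ_{ℓ=j}^{n} [det X[{k+1, k+2⋯},{j, ℓ+1⋯}] / det X[{k+1, k+2⋯},{ℓ, ℓ+1⋯}]] r_ℓ = Σ_{i=1}^{j} [det X[{⋯k−1, k},{⋯i−1, j}] / det X[{⋯k−1, k},{⋯i−1, i}]] q_i, and (B) r_j = Σ_{i=1}^{j} [det X̂[{⋯k−1, k},{⋯i−1, j}] / det X̂[{⋯k−1, k},{⋯i−1, i}]] s_i. Define x_{k′,j} to be the common value of the two sides of equation (A) for each j ∈ [n]. Then the (m+1)×n matrix obtained from X by inserting the row (x_{k′,1}, …, x_{k′,n}) between rows k and k+1 of X is totally positive. -/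
/-!
The Γ-path-sum matrix of a positive scaffolding is built one scaffolding row at a time. After a
half-turn of all indices, Γ-paths become L-paths, and the rotated path-sum matrix arises by
iterating the step `A ↦ (t ; A ⋆ t)`, where `t` is a positive row and
`(v ⋆ t)_j = ∑_{c ≤ j} v_c t_j / t_c` (`XGamma_eq_pushRows`).

This step preserves total positivity (`TPBlock.extend`). Divide each column by the entry of `t`
and subtract adjacent columns: the prefix sums turn into sums over disjoint blocks of columns, and
multilinearity writes each minor of `(t ; A ⋆ t)` as a nonempty positive combination of minors
of `A`.

In the same expansion, the minor with a fixed corner block and a varying last column `j`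
transforms, up to a positive factor, exactly like a row `v ↦ v ⋆ t` (`brMinor_step`). Two facts
follow. The coefficients in equations (A) and (B) are the coefficients of the linear map that
pushes a row through a scaffolding (`pushRows_eq_sum_brMinor`). And a matrix with positive corner
minors has a positive scaffolding, found by undoing the steps (`exists_scaffold`).

Let `Xhat` be the path-sum matrix of the rows of `T` above the place of insertion. It is totally
positive, hence, without rotation, it also has a positive scaffolding for L-paths. Equation (B)
says that `r` results from pushing the positive row `s` through that scaffolding, so `Xhat` with
the row `r` appended is totally positive (`TPBlock.append`). Pushing this matrix through the rows
of `T` below the place of insertion recovers the rows of `X` above it, turns `r` into the left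
side of (A), and adds the lower rows of `X`; total positivity survives once more.
-/

open Finset

/-- A real matrix is totally positive if every minor (determinant of a square submatrix
obtained by selecting rows and columns in increasing order) is positive. -/
def TotallyPositive {m n : ℕ} (A : Matrix (Fin m) (Fin n) ℝ) : Prop :=
  ∀ (r : ℕ) (f : Fin r → Fin m) (g : Fin r → Fin n),
    StrictMono f → StrictMono g → 0 < (A.submatrix f g).det

/-- A matrix is (strongly) positive if all of its entries are positive. -/
def EntrywisePos {m n : ℕ} (A : Matrix (Fin m) (Fin n) ℝ) : Prop :=
  ∀ i j, 0 < A i j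

/-- The weight of the Γ-path encoded by the pair of finsets `(I, J)`.
A Γ-path with Γ-turns `(i₁,j₁), …, (i_p,j_p)`, where `i₁ < i₂ < ⋯ < i_p` and
`j₁ > j₂ > ⋯ > j_p`, corresponds to the pair `I = {i₁,…,i_p}`, `J = {j₁,…,j_p}`;
the path runs from row vertex `i₁ = min I` to column vertex `j_p = min J`.
Its weight is `t_{i₁j₁} · ∏_{s=1}^{p−1} t_{i_{s+1} j_s}⁻¹ · t_{i_{s+1} j_{s+1}}`. -/
noncomputable def gammaWeight {m n : ℕ} (T : Matrix (Fin m) (Fin n) ℝ)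
    (I : Finset (Fin m)) (J : Finset (Fin n)) : ℝ :=
  if h : I.Nonempty ∧ J.Nonempty ∧ I.card = J.card then
    let p := I.card
    let row : ℕ → Fin m := fun s => (I.sort (· ≤ ·)).getD s (I.min' h.1)
    let col : ℕ → Fin n := fun s => (J.sort (· ≤ ·)).getD (p - 1 - s) (J.min' h.2.1)
    T (row 0) (col 0) *
      ∏ s ∈ Finset.range (p - 1),
        ((T (row (s + 1)) (col s))⁻¹ * T (row (s + 1)) (col (s + 1)))
  else 0

/-- The Γ-path-sum matrix `X_Γ(T)`: its `(i,j)` entry is the sum of the weights of all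
Γ-paths from row vertex `i` to column vertex `j`. -/
noncomputable def XGamma {m n : ℕ} (T : Matrix (Fin m) (Fin n) ℝ) :
    Matrix (Fin m) (Fin n) ℝ :=
  Matrix.of fun i j =>
    ∑ I ∈ Finset.univ.filter (fun I : Finset (Fin m) => I.min = (i : WithTop (Fin m))),
      ∑ J ∈ Finset.univ.filter (fun J : Finset (Fin n) =>
          J.min = (j : WithTop (Fin n)) ∧ J.card = I.card),
        gammaWeight T I J

/-- The weight of the L-path encoded by the pair of finsets `(I, J)`.
An L-path with turns `(i₁,j₁), …, (i_p,j_p)`, where `i₁ > i₂ > ⋯ > i_p` and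
`j₁ < j₂ < ⋯ < j_p`, corresponds to `I = {i₁,…,i_p}`, `J = {j₁,…,j_p}`;
the path runs from row vertex `i₁ = max I` to column vertex `j_p = max J`. -/
noncomputable def lWeight {m n : ℕ} (T : Matrix (Fin m) (Fin n) ℝ)
    (I : Finset (Fin m)) (J : Finset (Fin n)) : ℝ :=
  if h : I.Nonempty ∧ J.Nonempty ∧ I.card = J.card then
    let p := I.card
    let row : ℕ → Fin m := fun s => (I.sort (· ≤ ·)).getD (p - 1 - s) (I.min' h.1)
    let col : ℕ → Fin n := fun s => (J.sort (· ≤ ·)).getD s (J.min' h.2.1)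
    T (row 0) (col 0) *
      ∏ s ∈ Finset.range (p - 1),
        ((T (row (s + 1)) (col s))⁻¹ * T (row (s + 1)) (col (s + 1)))
  else 0

/-- The L-path-sum matrix `X_L(T)`. -/
noncomputable def XL {m n : ℕ} (T : Matrix (Fin m) (Fin n) ℝ) :
    Matrix (Fin m) (Fin n) ℝ :=
  Matrix.of fun i j =>
    ∑ I ∈ Finset.univ.filter (fun I : Finset (Fin m) => I.max = (i : WithBot (Fin m))),
      ∑ J ∈ Finset.univ.filter (fun J : Finset (Fin n) =>
          J.max = (j : WithBot (Fin n)) ∧ J.card = I.card),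
        lWeight T I J

/-- The set of internal vertices traversed by the Γ-path encoded by `(I, J)`:
horizontal segments `{(i_s, b) : j_s ≤ b ≤ j_{s-1}}` (with `j₀` interpreted as the last
column) and vertical segments `{(a, j_s) : i_s ≤ a ≤ i_{s+1}}` (with `i_{p+1}` interpreted
as the last row). -/
def pathVerts {m n : ℕ} (I : Finset (Fin m)) (J : Finset (Fin n)) :
    Finset (Fin m × Fin n) :=
  Finset.univ.filter fun v =>
    (∃ s ∈ Finset.range I.card,
        v.1 = (I.sort (· ≤ ·)).getD s v.1 ∧
        (J.sort (· ≤ ·)).getD (J.card - 1 - s) v.2 ≤ v.2 ∧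
        (s = 0 ∨ v.2 ≤ (J.sort (· ≤ ·)).getD (J.card - s) v.2)) ∨
    (∃ s ∈ Finset.range I.card,
        v.2 = (J.sort (· ≤ ·)).getD (J.card - 1 - s) v.2 ∧
        (I.sort (· ≤ ·)).getD s v.1 ≤ v.1 ∧
        (s + 1 = I.card ∨ v.1 ≤ (I.sort (· ≤ ·)).getD (s + 1) v.1))

/-- The sequence of matrices produced by Cauchon's Algorithm: `cauchonSeq X t` is the
matrix obtained after performing the first `t` steps, the steps being indexed by the
positions `(i,j) ∈ [m]×[n]` (1-based) in increasing reverse lexicographic order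
(`(m,n)` first); the step at 1-based position `(i,j)` is performed on `cauchonSeq X t`
with `t = (m−i)·n + (n−j)`, so that the matrix `X^{(i,j)}` of Cauchon's Algorithm is
`cauchonSeq X ((m−i)·n + (n−j))`. -/
noncomputable def cauchonSeq {m n : ℕ} (X : Matrix (Fin m) (Fin n) ℝ) :
    ℕ → Matrix (Fin m) (Fin n) ℝ
  | 0 => X
  | t + 1 =>
    let Y := cauchonSeq X t
    Matrix.of fun k l =>
      let i0 : Fin m := ⟨m - 1 - t / n,
        lt_of_le_of_lt (Nat.sub_le _ _) (by have := k.isLt; omega)⟩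
      let j0 : Fin n := ⟨n - 1 - t % n,
        lt_of_le_of_lt (Nat.sub_le _ _) (by have := l.isLt; omega)⟩
      if (k : ℕ) < (i0 : ℕ) ∧ (l : ℕ) < (j0 : ℕ) then
        Y k l - Y k j0 * (Y i0 j0)⁻¹ * Y i0 l
      else Y k l

/-- The output `T = X^{(1,1)}` of Cauchon's Algorithm. -/
noncomputable def cauchonOutput {m n : ℕ} (X : Matrix (Fin m) (Fin n) ℝ) :
    Matrix (Fin m) (Fin n) ℝ :=
  cauchonSeq X ((m - 1) * n + (n - 1))

/-- `contigMinorTL A i j` (1-based `i`, `j`) is the minor `det A[{i⋯},{j⋯}]` of the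
largest contiguous submatrix of `A` with top-left corner `(i,j)`, i.e. with rows
`i, …, i+k` and columns `j, …, j+k` where `k = min(M−i, N−j)`; it is `1` (the empty
determinant) if `(i,j)` is out of range. -/
noncomputable def contigMinorTL {M N : ℕ} (A : Matrix (Fin M) (Fin N) ℝ) (i j : ℕ) : ℝ :=
  if h : 1 ≤ i ∧ i ≤ M ∧ 1 ≤ j ∧ j ≤ N then
    (A.submatrix
      (fun s : Fin (min (M - i) (N - j) + 1) =>
        (⟨i - 1 + (s : ℕ), by have := s.isLt; omega⟩ : Fin M))
      (fun s : Fin (min (M - i) (N - j) + 1) =>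
        (⟨j - 1 + (s : ℕ), by have := s.isLt; omega⟩ : Fin N))).det
  else 1

/-- `borderMinorTL A i₀ j₀ i j` (1-based indices, `i₀ < i`, `j₀ < j`) is the minor
`det A[{i₀, i⋯},{j₀, j⋯}]` with rows `{i₀} ∪ {i, …, i+k}` and columns
`{j₀} ∪ {j, …, j+k}` where `k = min(M−i, N−j)`; when the contiguous part is out of range
(`i > M` or `j > N`) it is the single entry `A[{i₀},{j₀}]`, and it is `1` if `(i₀,j₀)`
is out of range. -/
noncomputable def borderMinorTL {M N : ℕ} (A : Matrix (Fin M) (Fin N) ℝ)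
    (i₀ j₀ i j : ℕ) : ℝ :=
  if h : 1 ≤ i₀ ∧ i₀ ≤ M ∧ 1 ≤ j₀ ∧ j₀ ≤ N then
    if h2 : i₀ < i ∧ i ≤ M ∧ j₀ < j ∧ j ≤ N then
      (A.submatrix
        (fun s : Fin (min (M - i) (N - j) + 2) =>
          if (s : ℕ) = 0 then (⟨i₀ - 1, by omega⟩ : Fin M)
          else ⟨i - 1 + ((s : ℕ) - 1), by have := s.isLt; omega⟩)
        (fun s : Fin (min (M - i) (N - j) + 2) =>
          if (s : ℕ) = 0 then (⟨j₀ - 1, by omega⟩ : Fin N)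
          else ⟨j - 1 + ((s : ℕ) - 1), by have := s.isLt; omega⟩)).det
    else A ⟨i₀ - 1, by omega⟩ ⟨j₀ - 1, by omega⟩
  else 1

/-- `borderMinorBR A i j i₀ j₀` (1-based indices, `i < i₀`, `j < j₀`) is the minor
`det A[{⋯i, i₀},{⋯j, j₀}]` with rows `{i−k, …, i} ∪ {i₀}` and columns
`{j−k, …, j} ∪ {j₀}` where `k = min(i−1, j−1)`; when the contiguous part is empty
(`i = 0` or `j = 0`) it is the single entry `A[{i₀},{j₀}]`, and it is `1` if `(i₀,j₀)`
is out of range. -/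
noncomputable def borderMinorBR {M N : ℕ} (A : Matrix (Fin M) (Fin N) ℝ)
    (i j i₀ j₀ : ℕ) : ℝ :=
  if h : 1 ≤ i₀ ∧ i₀ ≤ M ∧ 1 ≤ j₀ ∧ j₀ ≤ N then
    if h2 : 1 ≤ i ∧ i < i₀ ∧ 1 ≤ j ∧ j < j₀ then
      (A.submatrix
        (fun s : Fin (min (i - 1) (j - 1) + 2) =>
          if (s : ℕ) = min (i - 1) (j - 1) + 1 then (⟨i₀ - 1, by omega⟩ : Fin M)
          else ⟨i - 1 - min (i - 1) (j - 1) + (s : ℕ), by have := s.isLt; omega⟩)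
        (fun s : Fin (min (i - 1) (j - 1) + 2) =>
          if (s : ℕ) = min (i - 1) (j - 1) + 1 then (⟨j₀ - 1, by omega⟩ : Fin N)
          else ⟨j - 1 - min (i - 1) (j - 1) + (s : ℕ), by have := s.isLt; omega⟩)).det
    else A ⟨i₀ - 1, by omega⟩ ⟨j₀ - 1, by omega⟩
  else 1

/-! ### Row operations that preserve total positivity -/

/-- The row operation `v ↦ v ⋆ t`, `(v ⋆ t)_j = ∑_{c ≤ j} v_c t_j / t_c`: it adds to the L-paths
recorded in `v` the possible detour along one further scaffolding row `t`. Rows are indexed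
by all of `ℕ`; only finitely many columns are ever used. -/
noncomputable def starRow (v t : ℕ → ℝ) : ℕ → ℝ :=
  fun j => ∑ c ∈ range (j + 1), v c * (t j / t c)

/-- `pushRows U p v = ((v ⋆ U_{p-1}) ⋆ ⋯) ⋆ U_0`. The `i`-th row of the L-path-sum matrix of the
scaffolding `U` is `pushRows U i (U i)`. -/
noncomputable def pushRows : (ℕ → ℕ → ℝ) → ℕ → (ℕ → ℝ) → (ℕ → ℝ)
  | _, 0, v => v
  | U, p + 1, v => starRow (pushRows (fun i => U (i + 1)) p v) (U 0)

/-- Prepend the row `t` to the matrix `A`. -/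
def consRow (t : ℕ → ℝ) (A : ℕ → ℕ → ℝ) : ℕ → ℕ → ℝ
  | 0 => t
  | i + 1 => A i

/-- Total positivity of the top left `m × n` block of an infinite matrix. -/
def TPBlock (m n : ℕ) (A : ℕ → ℕ → ℝ) : Prop :=
  ∀ (r : ℕ) (f g : Fin r → ℕ), StrictMono f → StrictMono g → (∀ i, f i < m) → (∀ i, g i < n) →
    0 < (Matrix.of fun a b => A (f a) (g b)).det

/-- The minor of `A` with rows `a, …, a + q` and columns `i - q, …, i - 1, j`. -/
noncomputable def solidMinor (A : ℕ → ℕ → ℝ) (a q i j : ℕ) : ℝ :=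
  (Matrix.of fun (x y : Fin (q + 1)) =>
    A (a + x) (if (y : ℕ) < q then i - q + y else j)).det

/-- The minor with bottom row `p` and columns `…, i - 1, j`, extended up and to the left as far as
possible (zero-based indices). -/
noncomputable def brMinor (A : ℕ → ℕ → ℝ) (p i j : ℕ) : ℝ :=
  solidMinor A (p - min p i) (min p i) i j

/-- Multilinearity of the determinant in its columns. -/
theorem det_sum_cols {r : ℕ} (f : Fin r → ℕ → ℝ) (S : Fin r → Finset ℕ) :
    (Matrix.of fun a b => ∑ c ∈ S b, f a c).det
      = ∑ c ∈ Fintype.piFinset S, (Matrix.of fun a b => f a (c b)).det := by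
  rw [← Matrix.det_transpose]
  have h := (Matrix.detRowAlternating (n := Fin r) (R := ℝ)).toMultilinearMap.map_sum_finset
    (fun (b : Fin r) (c : ℕ) => (fun a => f a c)) S
  have e : (Matrix.of fun a b => ∑ c ∈ S b, f a c).transpose =
      (fun b => ∑ c ∈ S b, (fun a => f a c)) := by
    ext b a; simp
  rw [e]
  refine h.trans (Finset.sum_congr rfl fun c _ => ?_)
  rw [← Matrix.det_transpose]
  rfl

theorem sum_range_split (f : ℕ → ℝ) {a b : ℕ} (h : a < b) :
    ∑ c ∈ range (b + 1), f c = ∑ c ∈ Ioc a b, f c + 1 * ∑ c ∈ range (a + 1), f c := by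
  have : range (b + 1) = Ioc a b ∪ range (a + 1) := by
    ext x; simp; omega
  rw [this, Finset.sum_union, one_mul]
  rw [Finset.disjoint_left]; intro x; simp; omega

/-- The column blocks between consecutive selected columns, including the block before the first
one. -/
def fullBlocks {r : ℕ} (g : Fin (r + 1) → ℕ) : Fin (r + 1) → Finset ℕ :=
  Fin.cons (range (g 0 + 1)) fun b => Ioc (g b.castSucc) (g b.succ)

theorem det_scaled_sums {r : ℕ} (e : Fin r → ℕ → ℝ) (t : ℕ → ℝ) (S : Fin r → Finset ℕ)
    (g : Fin r → ℕ) :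
    (∏ b, t (g b)) * (Matrix.of fun a b => ∑ c ∈ S b, e a c / t c).det
      = ∑ c ∈ Fintype.piFinset S, (∏ b, t (g b) / t (c b)) *
          (Matrix.of fun a b => e a (c b)).det := by
  rw [det_sum_cols (fun a c => e a c / t c), Finset.mul_sum]
  refine Finset.sum_congr rfl fun c _ => ?_
  have : (Matrix.of fun a b => e a (c b) / t (c b)) =
      Matrix.of fun a b => (t (c b))⁻¹ * (Matrix.of fun a b => e a (c b)) a b := by
    ext a b; simp [div_eq_inv_mul]
  rw [this, Matrix.det_mul_row, ← mul_assoc, ← Finset.prod_mul_distrib]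
  simp only [div_eq_mul_inv]

theorem starRow_eq (v t : ℕ → ℝ) (j : ℕ) :
    starRow v t j = t j * ∑ c ∈ range (j + 1), v c / t c := by
  unfold starRow
  rw [Finset.mul_sum]
  exact Finset.sum_congr rfl fun c _ => by ring

/-- Expansion of the minors of `A ⋆ t`: subtracting adjacent (normalised) columns turns prefix sums
into sums over the blocks, and multilinearity does the rest. -/
theorem det_starRow {r : ℕ} (e : Fin (r + 1) → ℕ → ℝ) (t : ℕ → ℝ) (g : Fin (r + 1) → ℕ)
    (hg : StrictMono g) :
    (Matrix.of fun a b => starRow (e a) t (g b)).det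
      = ∑ c ∈ Fintype.piFinset (fullBlocks g), (∏ b, t (g b) / t (c b)) *
          (Matrix.of fun a b => e a (c b)).det := by
  rw [← det_scaled_sums]
  have : (Matrix.of fun a b => starRow (e a) t (g b)) = Matrix.of fun a b => t (g b) *
      (Matrix.of fun a b => ∑ c ∈ range (g b + 1), e a c / t c) a b := by
    ext a b; simp [starRow_eq]
  rw [this, Matrix.det_mul_row]
  congr 1
  refine Matrix.det_eq_of_forall_col_eq_smul_add_pred (fun _ => 1) ?_ ?_
  · intro i; simp [fullBlocks]
  · intro i j
    simp only [Matrix.of_apply, fullBlocks, Fin.cons_succ]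
    exact sum_range_split _ (hg (Fin.castSucc_lt_succ))

/-- Expansion of the minors of `(t ; A ⋆ t)` that use the new top row `t`. After normalising the
columns the top row is constant, so subtracting adjacent columns leaves a single entry in it and
the order of the determinant drops by one. -/
theorem det_consRow_starRow {r : ℕ} (e : Fin r → ℕ → ℝ) (t : ℕ → ℝ) (g : Fin (r + 1) → ℕ)
    (hg : StrictMono g) :
    (Matrix.of fun (a b : Fin (r + 1)) =>
        (Fin.cons (t (g b)) (fun a => starRow (e a) t (g b)) : Fin (r + 1) → ℝ) a).det
      = t (g 0) * ∑ c ∈ Fintype.piFinset (fun b : Fin r => Ioc (g b.castSucc) (g b.succ)),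
          (∏ b : Fin r, t (g b.succ) / t (c b)) * (Matrix.of fun a b => e a (c b)).det := by
  rw [← det_scaled_sums e t _ (fun b => g b.succ), ← mul_assoc, ← Fin.prod_univ_succ
    (fun b => t (g b))]
  have : (Matrix.of fun (a b : Fin (r + 1)) =>
        (Fin.cons (t (g b)) (fun a => starRow (e a) t (g b)) : Fin (r + 1) → ℝ) a) =
      Matrix.of fun a b => t (g b) *
      (Matrix.of fun (a b : Fin (r + 1)) => (Fin.cons 1
        (fun a => ∑ c ∈ range (g b + 1), e a c / t c) : Fin (r + 1) → ℝ) a) a b := by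
    ext a b
    refine Fin.cases ?_ (fun a => ?_) a <;> simp [starRow_eq]
  rw [this, Matrix.det_mul_row]
  congr 1
  let B : Matrix (Fin (r + 1)) (Fin (r + 1)) ℝ := Matrix.of fun a b =>
    (Fin.cons (if b = 0 then 1 else 0) (fun a => ∑ c ∈ fullBlocks g b, e a c / t c) :
      Fin (r + 1) → ℝ) a
  have hB : B.det = (Matrix.of fun a (b : Fin r) =>
      ∑ c ∈ Ioc (g b.castSucc) (g b.succ), e a c / t c).det := by
    rw [Matrix.det_succ_row_zero, Finset.sum_eq_single 0]
    · simp [B, fullBlocks, Matrix.submatrix]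
    · intro b _ hb; simp [B, hb]
    · simp
  rw [← hB]
  refine Matrix.det_eq_of_forall_col_eq_smul_add_pred (fun _ => 1) ?_ ?_
  · intro i; refine Fin.cases ?_ (fun i => ?_) i <;> simp [B, fullBlocks]
  · intro i j
    refine Fin.cases ?_ (fun i => ?_) i
    · simp [B]
    · simp only [Matrix.of_apply, B, fullBlocks, Fin.cons_succ]
      exact sum_range_split _ (hg (Fin.castSucc_lt_succ))

theorem TPBlock.congr {m n : ℕ} {A B : ℕ → ℕ → ℝ} (hA : TPBlock m n A)
    (h : ∀ i < m, ∀ j < n, A i j = B i j) : TPBlock m n B := by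
  intro r f g hf hg hfm hgn
  have := hA r f g hf hg hfm hgn
  rwa [show (Matrix.of fun a b => A (f a) (g b)) = Matrix.of fun a b => B (f a) (g b) from by
    ext a b; exact h _ (hfm a) _ (hgn b)] at this

theorem TPBlock.rev {m n : ℕ} {A : ℕ → ℕ → ℝ} (hA : TPBlock m n A) :
    TPBlock m n (fun i j => A (m - 1 - i) (n - 1 - j)) := by
  intro r f g hf hg hfm hgn
  have := hA r (fun x => m - 1 - f x.rev) (fun x => n - 1 - g x.rev)
    (fun x y h => by
      have h1 := hf (Fin.rev_lt_rev.2 h); have := hfm x.rev; have := hfm y.rev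
      simp only; omega)
    (fun x y h => by
      have h1 := hg (Fin.rev_lt_rev.2 h); have := hgn x.rev; have := hgn y.rev
      simp only; omega)
    (fun x => by have := hfm x.rev; omega)
    (fun x => by have := hgn x.rev; omega)
  rw [← Matrix.det_submatrix_equiv_self Fin.revPerm] at this
  simpa [Matrix.submatrix] using this

/-- The step `A ↦ (t ; A ⋆ t)` preserves total positivity: each minor of the result expands as a
positive combination of minors of `A`. -/
theorem TPBlock.step {m n : ℕ} {A : ℕ → ℕ → ℝ} {t : ℕ → ℝ} (ht : ∀ j, 0 < t j)
    (hA : TPBlock m n A) : TPBlock (m + 1) n (consRow t fun i => starRow (A i) t) := by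
  intro r f g hf hg hfm hgn
  cases r with
  | zero => simp
  | succ r =>
  by_cases h0 : f 0 = 0
  · have hpos : ∀ a : Fin r, 0 < f a.succ := fun a => by
      have := hf (Fin.succ_pos a); omega
    have e : (Matrix.of fun a b => consRow t (fun i => starRow (A i) t) (f a) (g b)) =
        (Matrix.of fun (a b : Fin (r + 1)) =>
          (Fin.cons (t (g b)) (fun a => starRow (A (f a.succ - 1)) t (g b)) :
            Fin (r + 1) → ℝ) a) := by
      ext a b
      refine Fin.cases ?_ (fun a => ?_) a
      · simp [h0, consRow]
      · obtain ⟨x, hx⟩ := Nat.exists_eq_succ_of_ne_zero (hpos a).ne'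
        simp [hx, consRow]
    rw [e, det_consRow_starRow _ _ _ hg]
    refine mul_pos (ht _) (Finset.sum_pos (fun c hc => ?_) ?_)
    · rw [Fintype.mem_piFinset] at hc
      simp only [mem_Ioc] at hc
      refine mul_pos (Finset.prod_pos fun b _ => div_pos (ht _) (ht _)) ?_
      refine hA r (fun a => f a.succ - 1) c ?_ ?_ ?_ ?_
      · intro a b h
        have := hf (Fin.succ_lt_succ_iff.2 h); have := hpos a; show f a.succ - 1 < f b.succ - 1; omega
      · intro a b h
        have h1 : g a.succ ≤ g b.castSucc := hg.monotone (by
          rw [Fin.le_def]; simp; exact h)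
        have := hc a; have := hc b; omega
      · intro a; have := hpos a; have := hfm a.succ; omega
      · intro a; have := hc a; have := hgn a.succ; omega
    · refine ⟨fun b => g b.succ, ?_⟩
      rw [Fintype.mem_piFinset]
      intro b; simp only [mem_Ioc]; exact ⟨hg Fin.castSucc_lt_succ, le_rfl⟩
  · have hpos : ∀ a, 0 < f a := fun a => by
      have := hf.monotone (Fin.zero_le a); omega
    have e : (Matrix.of fun a b => consRow t (fun i => starRow (A i) t) (f a) (g b)) =
        (Matrix.of fun (a b : Fin (r + 1)) => starRow (A (f a - 1)) t (g b)) := by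
      ext a b
      obtain ⟨x, hx⟩ := Nat.exists_eq_succ_of_ne_zero (hpos a).ne'
      simp [hx, consRow]
    rw [e, det_starRow _ _ _ hg]
    have hmem : ∀ c ∈ Fintype.piFinset (fullBlocks g), StrictMono c ∧ ∀ b, c b ≤ g b := by
      intro c hc
      rw [Fintype.mem_piFinset] at hc
      have h1 : ∀ b, c b ≤ g b := fun b => by
        refine Fin.cases ?_ (fun b => ?_) b
        · have := hc 0; simp [fullBlocks] at this; omega
        · have := hc b.succ; simp [fullBlocks] at this; omega
      refine ⟨?_, h1⟩
      rw [Fin.strictMono_iff_lt_succ]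
      intro b
      have := hc b.succ; simp [fullBlocks] at this
      have := h1 b.castSucc; omega
    refine Finset.sum_pos (fun c hc => ?_) ?_
    · obtain ⟨h1, h2⟩ := hmem c hc
      refine mul_pos (Finset.prod_pos fun b _ => div_pos (ht _) (ht _)) ?_
      refine hA (r + 1) (fun a => f a - 1) c ?_ h1 ?_ ?_
      · intro a b h
        have := hf h; have := hpos a; show f a - 1 < f b - 1; omega
      · intro a; have := hpos a; have := hfm a; omega
      · intro a; have := h2 a; have := hgn a; omega
    · refine ⟨g, ?_⟩
      rw [Fintype.mem_piFinset]
      intro b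
      refine Fin.cases ?_ (fun b => ?_) b
      · simp [fullBlocks]
      · simp only [fullBlocks, Fin.cons_succ, mem_Ioc]; exact ⟨hg Fin.castSucc_lt_succ, le_rfl⟩

/-- Stacking a totally positive block below a positive scaffolding gives a totally positive
matrix. -/
theorem TPBlock.extend {a n : ℕ} {V : ℕ → ℕ → ℝ} (hV : TPBlock a n V) :
    ∀ (p : ℕ) (U : ℕ → ℕ → ℝ), (∀ i j, 0 < U i j) →
      TPBlock (p + a) n (fun i => if i < p then pushRows U i (U i) else
        pushRows U p (V (i - p))) := by
  intro p
  induction p with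
  | zero => intro U _; simpa [pushRows] using hV
  | succ p ih =>
    intro U hU
    have := (ih (fun i => U (i + 1)) fun i j => hU _ _).step (hU 0)
    rw [show p + 1 + a = p + a + 1 by omega]
    refine this.congr fun i _ j _ => ?_
    cases i with
    | zero => simp [consRow, pushRows]
    | succ i =>
      simp only [consRow, Nat.add_lt_add_iff_right, Nat.add_sub_add_right]
      split_ifs <;> rfl

theorem TPBlock.zero (n : ℕ) (A : ℕ → ℕ → ℝ) : TPBlock 0 n A := by
  intro r f g _ _ h _
  cases r with
  | zero => simp
  | succ r => exact absurd (h 0) (by simp)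

theorem TPBlock.scaffold {n : ℕ} (p : ℕ) (U : ℕ → ℕ → ℝ) (hU : ∀ i j, 0 < U i j) :
    TPBlock p n (fun i => pushRows U i (U i)) :=
  ((TPBlock.zero n U).extend p U hU).congr fun i hi j _ => by
    have : i < p := hi
    simp [this]

/-! ### Bordered corner minors -/

/-- A sum over column choices in which every block but the last is a singleton. -/
theorem sum_piFinset_last {q : ℕ} (S : Fin (q + 1) → Finset ℕ) (h : ℕ → ℕ) (L : Finset ℕ)
    (hS : ∀ b : Fin (q + 1), S b = if (b : ℕ) < q then {h b} else L) (F : (Fin (q + 1) → ℕ) → ℝ) :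
    ∑ c ∈ Fintype.piFinset S, F c = ∑ x ∈ L, F (fun b => if (b : ℕ) < q then h b else x) := by
  refine Finset.sum_nbij' (fun c => c (Fin.last q)) (fun x b => if (b : ℕ) < q then h b else x)
    ?_ ?_ ?_ ?_ ?_
  · intro c hc
    have := Fintype.mem_piFinset.1 hc (Fin.last q)
    simpa [hS] using this
  · intro x hx
    rw [Fintype.mem_piFinset]
    intro b
    rw [hS]
    split_ifs <;> simp [hx]
  · intro c hc
    funext b
    have h1 := Fintype.mem_piFinset.1 hc b
    rw [hS] at h1
    split_ifs with hb
    · rw [if_pos hb] at h1; exact (Finset.mem_singleton.1 h1).symm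
    · congr 1; ext; simp; omega
  · intro x _; simp
  · intro c hc
    congr 1
    funext b
    have h1 := Fintype.mem_piFinset.1 hc b
    rw [hS] at h1
    split_ifs with hb
    · rw [if_pos hb] at h1; simpa using h1
    · congr 1; ext; simp; omega

theorem prod_ratio_last {q : ℕ} (t : ℕ → ℝ) (ht : ∀ j, 0 < t j) (h : ℕ → ℕ) (j x : ℕ) :
    (∏ b : Fin (q + 1), t (if (b : ℕ) < q then h b else j) /
      t (if (b : ℕ) < q then h b else x)) = t j / t x := by
  rw [Fin.prod_univ_castSucc]
  simp [fun j => div_self (ht j).ne']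

/-- Effect of the step `A ↦ (t ; A ⋆ t)` on the bordered corner minors: up to a positive factor
depending only on the corner, they transform by the same rule as a row `v ↦ v ⋆ t`. -/
theorem brMinor_step (A : ℕ → ℕ → ℝ) (t : ℕ → ℝ) (ht : ∀ j, 0 < t j) (p i : ℕ) :
    ∃ κ : ℝ, 0 < κ ∧ ∀ j, i ≤ j →
      brMinor (consRow t fun i => starRow (A i) t) (p + 1) i j
        = κ * ∑ c ∈ Icc i j, brMinor A p i c * (t j / t c) := by
  rcases le_or_gt i p with hip | hip
  · refine ⟨1, one_pos, fun j hij => ?_⟩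
    unfold brMinor
    rw [min_eq_right (by omega : i ≤ p + 1), min_eq_right hip]
    unfold solidMinor
    set g : Fin (i + 1) → ℕ := fun b => if (b : ℕ) < i then i - i + b else j with hg_def
    have hg : StrictMono g := by
      intro a b hab
      have : (a : ℕ) < b := hab
      have := b.isLt
      simp only [hg_def]
      split_ifs <;> omega
    have e : (Matrix.of fun (x y : Fin (i + 1)) => consRow t (fun i => starRow (A i) t)
        (p + 1 - i + x) (if (y : ℕ) < i then i - i + y else j)) =
        Matrix.of fun (a b : Fin (i + 1)) => starRow (A (p - i + a)) t (g b) := by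
      ext a b
      rw [Matrix.of_apply, show p + 1 - i + (a : ℕ) = p - i + a + 1 by omega]
      rfl
    rw [e, det_starRow _ _ _ hg, sum_piFinset_last _ (fun b => i - i + b) (Icc i j), one_mul]
    · refine Finset.sum_congr rfl fun c _ => ?_
      rw [hg_def, prod_ratio_last t ht (fun b => i - i + b), mul_comm]
    · intro b
      refine Fin.cases ?_ (fun b => ?_) b
      · simp only [fullBlocks, Fin.cons_zero, hg_def]
        ext x
        rcases Nat.eq_zero_or_pos i with h0 | h0 <;> simp [h0]
      · have hb : (b : ℕ) < i := b.isLt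
        simp only [fullBlocks, Fin.cons_succ, hg_def, Fin.val_castSucc, Fin.val_succ, if_pos hb]
        ext x
        split_ifs <;> simp <;> omega
  · -- The minor contains the row `t`; its first column `i - (p + 1)` gives the factor.
    refine ⟨t (i - (p + 1)), ht _, fun j hij => ?_⟩
    unfold brMinor
    rw [min_eq_left (by omega : p + 1 ≤ i), min_eq_left hip.le]
    unfold solidMinor
    set g : Fin (p + 1 + 1) → ℕ := fun b => if (b : ℕ) < p + 1 then i - (p + 1) + b else j
      with hg_def
    have hg : StrictMono g := by
      intro a b hab
      have : (a : ℕ) < b := hab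
      have := b.isLt
      simp only [hg_def]
      split_ifs <;> omega
    have e : (Matrix.of fun (x y : Fin (p + 1 + 1)) => consRow t (fun i => starRow (A i) t)
        (p + 1 - (p + 1) + x) (if (y : ℕ) < p + 1 then i - (p + 1) + y else j)) =
        Matrix.of fun (a b : Fin (p + 1 + 1)) =>
        (Fin.cons (t (g b)) (fun a : Fin (p + 1) => starRow (A (p - p + a)) t (g b)) :
          Fin (p + 1 + 1) → ℝ) a := by
      ext a b
      refine Fin.cases ?_ (fun a => ?_) a
      · simp [consRow, hg_def]
      · simp [consRow, hg_def]
    rw [e, det_consRow_starRow _ _ _ hg, sum_piFinset_last _ (fun b => i - p + b) (Icc i j)]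
    · rw [show t (g 0) = t (i - (p + 1)) by simp [hg_def]]
      congr 1
      refine Finset.sum_congr rfl fun c _ => ?_
      rw [mul_comm]
      congr 1
      rw [← prod_ratio_last (q := p) t ht (fun b => i - p + b)]
      refine Finset.prod_congr rfl fun b _ => ?_
      congr 2
      simp only [hg_def, Fin.val_succ]
      split_ifs <;> omega
    · intro b
      have hb := b.isLt
      simp only [hg_def, Fin.val_castSucc, Fin.val_succ]
      ext x
      split_ifs <;> simp <;> omega

theorem brMinor_zero (A : ℕ → ℕ → ℝ) (i j : ℕ) : brMinor A 0 i j = A 0 j := by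
  unfold brMinor
  rw [Nat.zero_min]
  simp [solidMinor]

/-- The rows `pushRows U (p + 1) v` expressed through bordered minors of the path-sum matrix. -/
theorem pushRows_eq_sum_brMinor (p : ℕ) : ∀ (U : ℕ → ℕ → ℝ), (∀ i j, 0 < U i j) →
    (∀ i, 0 < brMinor (fun i => pushRows U i (U i)) p i i) ∧
    ∀ (v : ℕ → ℝ) (j : ℕ), pushRows U (p + 1) v j = ∑ i ∈ range (j + 1),
      brMinor (fun i => pushRows U i (U i)) p i j /
        brMinor (fun i => pushRows U i (U i)) p i i * v i := by
  induction p with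
  | zero =>
    intro U hU
    have hb : ∀ i j, brMinor (fun i => pushRows U i (U i)) 0 i j = U 0 j := by
      intro i j
      rw [brMinor_zero]; rfl
    simp only [hb]
    refine ⟨fun i => hU 0 i, fun v j => ?_⟩
    simp only [pushRows, starRow]
    exact Finset.sum_congr rfl fun c _ => mul_comm _ _
  | succ p ih =>
    intro U hU
    obtain ⟨ih1, ih2⟩ := ih (fun i => U (i + 1)) fun i j => hU _ _
    set A : ℕ → ℕ → ℝ := fun i => pushRows (fun i => U (i + 1)) i (U (i + 1)) with hA
    have hcons : (fun i => pushRows U i (U i)) = consRow (U 0) fun i => starRow (A i) (U 0) := by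
      funext i
      cases i <;> rfl
    rw [hcons]
    have hdiag : ∀ i, ∃ κ : ℝ, 0 < κ ∧
        brMinor (consRow (U 0) fun i => starRow (A i) (U 0)) (p + 1) i i = κ * brMinor A p i i ∧
        ∀ j, i ≤ j → brMinor (consRow (U 0) fun i => starRow (A i) (U 0)) (p + 1) i j
        = κ * ∑ c ∈ Icc i j, brMinor A p i c * (U 0 j / U 0 c) := by
      intro i
      obtain ⟨κ, hκ, h⟩ := brMinor_step A (U 0) (hU 0) p i
      refine ⟨κ, hκ, ?_, h⟩
      rw [h i le_rfl]
      simp [(hU 0 i).ne']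
    refine ⟨fun i => ?_, fun v j => ?_⟩
    · obtain ⟨κ, hκ, h, -⟩ := hdiag i
      rw [h]; exact mul_pos hκ (ih1 i)
    · have : pushRows U (p + 1 + 1) v j =
          ∑ c ∈ range (j + 1), ∑ i ∈ range (c + 1),
            brMinor A p i c / brMinor A p i i * v i * (U 0 j / U 0 c) := by
        show starRow (pushRows (fun i => U (i + 1)) (p + 1) v) (U 0) j = _
        unfold starRow
        refine Finset.sum_congr rfl fun c _ => ?_
        rw [ih2, Finset.sum_mul]
      rw [this, Finset.sum_comm' (t' := range (j + 1)) (s' := fun i => Icc i j)]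
      · refine Finset.sum_congr rfl fun i hi => ?_
        obtain ⟨κ, hκ, h1, h2⟩ := hdiag i
        rw [h1, h2 j (by simpa [Nat.lt_succ_iff] using hi), mul_div_mul_left _ _ hκ.ne',
          Finset.sum_div, Finset.sum_mul]
        exact Finset.sum_congr rfl fun c _ => by ring
      · intro c i
        simp only [mem_range, mem_Icc]; omega

/-- A matrix whose corner minors are all positive is the L-path-sum matrix of a positive
scaffolding. -/
theorem exists_scaffold {n : ℕ} (m : ℕ) : ∀ A : ℕ → ℕ → ℝ,
    (∀ p < m, ∀ j < n, 0 < brMinor A p j j) →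
    ∃ U : ℕ → ℕ → ℝ, (∀ i j, 0 < U i j) ∧ ∀ i < m, ∀ j < n, A i j = pushRows U i (U i) j := by
  induction m with
  | zero => intro A _; exact ⟨fun _ _ => 1, fun _ _ => one_pos, fun i hi => absurd hi (by simp)⟩
  | succ m ih =>
    intro A hA
    set t : ℕ → ℝ := fun j => if j < n then A 0 j else 1 with ht_def
    have ht : ∀ j, 0 < t j := by
      intro j
      simp only [ht_def]
      split_ifs with hj
      · simpa [brMinor_zero] using hA 0 (by omega) j hj
      · exact one_pos
    -- Undo the step `B ↦ B ⋆ t` by normalised column differences.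
    set B : ℕ → ℕ → ℝ := fun i j =>
      t j * (A (i + 1) j / t j - if j = 0 then 0 else A (i + 1) (j - 1) / t (j - 1)) with hB_def
    have hB : ∀ i, starRow (B i) t = A (i + 1) := by
      intro i
      funext j
      rw [starRow_eq]
      have : ∑ c ∈ range (j + 1), B i c / t c = A (i + 1) j / t j := by
        induction j with
        | zero => simp [hB_def, (ht 0).ne']
        | succ j ihj =>
          rw [Finset.sum_range_succ, ihj]
          simp [hB_def, (ht (j + 1)).ne']
      rw [this, mul_div_cancel₀ _ (ht j).ne']
    have hAB : ∀ i, ∀ j < n, A i j = consRow t (fun i => starRow (B i) t) i j := by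
      intro i j hj
      cases i with
      | zero => simp [consRow, ht_def, hj]
      | succ i => simp [consRow, hB]
    obtain ⟨U, hU, h⟩ := ih B (by
      intro p hp j hj
      obtain ⟨κ, hκ, hs⟩ := brMinor_step B t ht p j
      have h1 := hA (p + 1) (by omega) j hj
      have : brMinor A (p + 1) j j =
          brMinor (consRow t fun i => starRow (B i) t) (p + 1) j j := by
        unfold brMinor solidMinor
        congr 1
        ext a b
        simp only [Matrix.of_apply]
        refine hAB _ _ ?_
        split_ifs <;> omega
      rw [this, hs j le_rfl] at h1
      simpa [(ht j).ne', hκ] using h1)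
    refine ⟨consRow t U, ?_, ?_⟩
    · intro i j; cases i
      · exact ht j
      · exact hU _ _
    · intro i hi j hj
      rw [hAB i j hj]
      cases i with
      | zero => rfl
      | succ i =>
        show starRow (B i) t j = starRow (pushRows U i (U i)) t j
        unfold starRow
        refine Finset.sum_congr rfl fun c hc => ?_
        rw [h i (by omega) c (by simp at hc; omega)]

theorem TPBlock.brMinor_pos {m n : ℕ} {A : ℕ → ℕ → ℝ} (hA : TPBlock m n A) {p j : ℕ}
    (hp : p < m) (hj : j < n) : 0 < brMinor A p j j := by
  refine hA _ (fun x => p - min p j + x) (fun y => if (y : ℕ) < min p j then j - min p j + y else j)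
    ?_ ?_ ?_ ?_
  · intro a b h
    have : (a : ℕ) < b := h
    exact Nat.add_lt_add_left h _
  · intro a b h
    have : (a : ℕ) < b := h
    have := b.isLt
    simp only; split_ifs <;> omega
  · intro a; have := a.isLt; omega
  · intro a; have := a.isLt; split_ifs <;> omega

/-- Appending to a totally positive matrix a row that is a positive combination of the normalised
bordered corner minors keeps total positivity. -/
theorem TPBlock.append {k n : ℕ} {A : ℕ → ℕ → ℝ} (hA : TPBlock (k + 1) n A) (s r : ℕ → ℝ)
    (hs : ∀ i, 0 < s i)
    (hr : ∀ j < n, r j = ∑ i ∈ range (j + 1), brMinor A k i j / brMinor A k i i * s i) :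
    TPBlock (k + 2) n (fun i => if i < k + 1 then A i else r) := by
  obtain ⟨U, hU, hAU⟩ := exists_scaffold (n := n) (k + 1) A fun p hp j hj => hA.brMinor_pos hp hj
  have hbr : ∀ i < n, ∀ j < n, brMinor A k i j = brMinor (fun i => pushRows U i (U i)) k i j := by
    intro i hi j hj
    unfold brMinor solidMinor
    congr 1
    ext a b
    have := a.isLt
    simp only [Matrix.of_apply]
    refine hAU _ (by omega) _ ?_
    split_ifs <;> omega
  have h1 : TPBlock 1 n (fun _ => s) := by
    intro r f g hf hg hfm hgn
    rcases r with _ | _ | r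
    · simp
    · simpa using hs _
    · have := hf (Fin.zero_lt_one (n := r)); have := hfm 1; omega
  refine (h1.extend (k + 1) U hU).congr fun i _ j hj => ?_
  split_ifs with h
  · exact (hAU i h j hj).symm
  · rw [(pushRows_eq_sum_brMinor k U hU).2, hr j hj]
    refine Finset.sum_congr rfl fun i hi => ?_
    have : i < n := by simp at hi; omega
    rw [hbr i this j hj, hbr i this i this]

/-! ### Γ-paths and the row recursion -/

theorem getD_of_lt {α : Type*} (l : List α) (s : ℕ) (d d' : α) (h : s < l.length) :
    l.getD s d = l.getD s d' := by
  rw [List.getD_eq_getElem _ _ h, List.getD_eq_getElem _ _ h]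

theorem sort_insert_top {m : ℕ} (I : Finset (Fin m)) (a : Fin m) (ha : ∀ x ∈ I, x < a) :
    (insert a I).sort (· ≤ ·) = I.sort (· ≤ ·) ++ [a] := by
  have hna : a ∉ I := fun h => lt_irrefl _ (ha a h)
  refine List.Perm.eq_of_pairwise (le := (· ≤ ·)) (fun x y _ _ h1 h2 => le_antisymm h1 h2)
    (Finset.pairwise_sort _ _) ?_ ?_
  · rw [List.pairwise_append]
    refine ⟨Finset.pairwise_sort _ _, List.pairwise_singleton _ _, ?_⟩
    intro x hx y hy
    rw [List.mem_singleton] at hy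
    subst hy
    exact (ha x ((Finset.mem_sort _).1 hx)).le
  · refine (List.perm_ext_iff_of_nodup (Finset.sort_nodup _ _) ?_).2 fun x => ?_
    · rw [List.nodup_append]
      refine ⟨Finset.sort_nodup _ _, List.nodup_singleton _, ?_⟩
      intro x hx y hy
      rw [List.mem_singleton] at hy
      subst hy
      exact (ha x ((Finset.mem_sort _).1 hx)).ne
    · simp [or_comm]

/-- Adding a last Γ-turn in a row `a` below and a column `j` to the left of all previous turns
multiplies the weight of a Γ-path ending at column `c` by `t_{ac}⁻¹ t_{aj}`. -/
theorem gammaWeight_insert {m n : ℕ} (T : Matrix (Fin m) (Fin n) ℝ) (I : Finset (Fin m))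
    (J : Finset (Fin n)) (a : Fin m) (j c : Fin n) (hI : I.Nonempty) (hc : J.min = c)
    (hcard : J.card = I.card) (ha : ∀ x ∈ I, x < a) (hj : j < c) :
    gammaWeight T (insert a I) (insert j J) = gammaWeight T I J * ((T a c)⁻¹ * T a j) := by
  have hna : a ∉ I := fun h => lt_irrefl _ (ha a h)
  have hJc : ∀ x ∈ J, c ≤ x := fun x hx => Finset.min_le_of_eq hx hc
  have hnj : j ∉ J := fun h => absurd (hJc j h) (not_le.2 hj)
  have hJ : J.Nonempty := ⟨c, Finset.mem_of_min hc⟩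
  have hp : 0 < I.card := hI.card_pos
  have hsI := sort_insert_top I a ha
  have hsJ : (insert j J).sort (· ≤ ·) = j :: J.sort (· ≤ ·) :=
    Finset.sort_insert _ (fun x hx => hj.le.trans (hJc x hx)) hnj
  have hlI : (I.sort (· ≤ ·)).length = I.card := Finset.length_sort _
  have hlJ : (J.sort (· ≤ ·)).length = I.card := (Finset.length_sort _).trans hcard
  have hJ0 : ∀ d, (J.sort (· ≤ ·)).getD 0 d = c := by
    intro d
    have hd : J.min' hJ = c := by
      have := Finset.coe_min' hJ
      rw [hc] at this
      exact WithTop.coe_injective this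
    rw [List.getD_eq_getElem _ _ (by omega)]
    exact Finset.sorted_zero_eq_min'.trans hd
  have hcI : (insert a I).card = I.card + 1 := Finset.card_insert_of_notMem hna
  have hcJ : (insert j J).card = I.card + 1 := by
    rw [Finset.card_insert_of_notMem hnj, hcard]
  unfold gammaWeight
  rw [dif_pos ⟨⟨a, by simp⟩, ⟨j, by simp⟩, by rw [hcI, hcJ]⟩, dif_pos ⟨hI, hJ, hcard.symm⟩]
  simp only [hcI, hsI, hsJ, Nat.add_sub_cancel]
  have row : ∀ (s : ℕ) (d d' : Fin m), s < I.card →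
      (I.sort (· ≤ ·) ++ [a]).getD s d = (I.sort (· ≤ ·)).getD s d' := by
    intro s d d' hs
    rw [List.getD_append _ _ _ _ (by omega)]
    exact getD_of_lt _ _ _ _ (by omega)
  have col : ∀ (s : ℕ) (d d' : Fin n), s < I.card →
      (j :: J.sort (· ≤ ·)).getD (I.card - s) d = (J.sort (· ≤ ·)).getD (I.card - 1 - s) d' := by
    intro s d d' hs
    rw [show I.card - s = I.card - 1 - s + 1 by omega, List.getD_cons_succ]
    exact getD_of_lt _ _ _ _ (by omega)
  obtain ⟨p, hpp⟩ : ∃ p, I.card = p + 1 := ⟨I.card - 1, by omega⟩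
  have hrange : range I.card = range (I.card - 1 + 1) := by rw [hpp]; rfl
  rw [hrange, Finset.prod_range_succ, ← mul_assoc]
  congr 1
  · rw [row 0 _ (I.min' hI) hp, col 0 _ (J.min' hJ) hp]
    congr 1
    refine Finset.prod_congr rfl fun s hs => ?_
    rw [mem_range] at hs
    rw [row (s + 1) _ (I.min' hI) (by omega), col s _ (J.min' hJ) (by omega),
      col (s + 1) _ (J.min' hJ) (by omega)]
  · have h1 : ∀ d, (I.sort (· ≤ ·) ++ [a]).getD (I.card - 1 + 1) d = a := by
      intro d
      rw [List.getD_append_right _ _ _ _ (by omega), hlI,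
        show I.card - 1 + 1 - I.card = 0 by omega]
      rfl
    rw [h1, col (I.card - 1) _ (J.min' hJ) (by omega), Nat.sub_self, hJ0,
      show I.card - (I.card - 1 + 1) = 0 by omega]
    rfl

/-- The turn sets of the Γ-paths from row `i` to column `j` that only turn in rows `< a`. -/
noncomputable def pathPairs (m n a : ℕ) (i : Fin m) (j : Fin n) :
    Finset (Finset (Fin m) × Finset (Fin n)) :=
  Finset.univ.filter fun p => p.1.min = (i : WithTop (Fin m)) ∧ (∀ x ∈ p.1, (x : ℕ) < a) ∧
    p.2.min = (j : WithTop (Fin n)) ∧ p.2.card = p.1.card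

/-- The path-sum restricted to Γ-paths that only turn in rows `< a`. -/
noncomputable def partialSum {m n : ℕ} (T : Matrix (Fin m) (Fin n) ℝ) (a : ℕ) (i : Fin m)
    (j : Fin n) : ℝ :=
  ∑ p ∈ pathPairs m n a i j, gammaWeight T p.1 p.2

theorem XGamma_eq_partialSum {m n : ℕ} (T : Matrix (Fin m) (Fin n) ℝ) (i : Fin m) (j : Fin n) :
    XGamma T i j = partialSum T m i j := by
  unfold XGamma partialSum pathPairs
  rw [Matrix.of_apply, Finset.sum_sigma']
  refine Finset.sum_nbij' (fun p => (p.1, p.2)) (fun p => ⟨p.1, p.2⟩) ?_ ?_ ?_ ?_ ?_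
  · rintro ⟨I, J⟩ h
    simp at h ⊢
    exact h
  · rintro ⟨I, J⟩ h
    simp at h ⊢
    exact h
  · rintro ⟨I, J⟩ _; rfl
  · rintro ⟨I, J⟩ _; rfl
  · rintro ⟨I, J⟩ _; rfl

theorem partialSum_self {m n : ℕ} (T : Matrix (Fin m) (Fin n) ℝ) (i : Fin m) (j : Fin n) :
    partialSum T (i + 1) i j = T i j := by
  have : pathPairs m n (i + 1) i j = {({i}, {j})} := by
    ext ⟨I, J⟩
    simp only [pathPairs, mem_filter, mem_univ, true_and, mem_singleton, Prod.mk.injEq]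
    constructor
    · rintro ⟨h1, h2, h3, h4⟩
      have hI : I = {i} := by
        ext x
        rw [mem_singleton]
        constructor
        · intro hx
          have := Finset.min_le_of_eq hx h1
          have := h2 x hx
          ext; rw [Fin.le_def] at *; omega
        · rintro rfl; exact Finset.mem_of_min h1
      refine ⟨hI, ?_⟩
      rw [hI, card_singleton, card_eq_one] at h4
      obtain ⟨x, rfl⟩ := h4
      rw [Finset.min_singleton] at h3
      rw [WithTop.coe_injective h3]
    · rintro ⟨rfl, rfl⟩
      simp
  rw [partialSum, this, sum_singleton]
  simp [gammaWeight]

/-- A Γ-path turning in rows `< a + 1` either avoids row `a`, or arrives in row `a` from some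
column `c > j` and ends there at column `j`. -/
theorem partialSum_succ {m n : ℕ} (T : Matrix (Fin m) (Fin n) ℝ) (hT : EntrywisePos T) (a : Fin m)
    (i : Fin m) (hi : i < a) (j : Fin n) :
    partialSum T (a + 1) i j =
      ∑ c ∈ univ.filter (fun c => j ≤ c), partialSum T a i c * (T a j / T a c) := by
  have hsplit : (univ.filter fun c => j ≤ c) = insert j (univ.filter fun c => j < c) := by
    ext c; simp [le_iff_eq_or_lt, eq_comm]
  rw [hsplit, sum_insert (by simp), div_self (hT a j).ne', mul_one]
  unfold partialSum
  rw [← Finset.sum_filter_add_sum_filter_not (pathPairs m n (a + 1) i j) (fun p => a ∉ p.1)]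
  congr 1
  · refine Finset.sum_congr ?_ fun _ _ => rfl
    ext ⟨I, J⟩
    simp only [pathPairs, mem_filter, mem_univ, true_and]
    constructor
    · rintro ⟨⟨h1, h2, h3, h4⟩, h5⟩
      refine ⟨h1, fun x hx => ?_, h3, h4⟩
      have := h2 x hx
      have : x ≠ a := fun h => h5 (h ▸ hx)
      have : (x : ℕ) ≠ a := fun h => this (Fin.ext h)
      omega
    · rintro ⟨h1, h2, h3, h4⟩
      exact ⟨⟨h1, fun x hx => (h2 x hx).trans (Nat.lt_succ_self _), h3, h4⟩,
        fun h => lt_irrefl _ (h2 a h)⟩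
  · simp only [Finset.sum_mul, not_not]
    rw [Finset.sum_sigma']
    symm
    refine Finset.sum_bij (fun p _ => (insert a p.2.1, insert j p.2.2)) ?_ ?_ ?_ ?_
    · rintro ⟨c, I, J⟩ h
      simp only [pathPairs, mem_sigma, mem_filter, mem_univ, true_and] at h ⊢
      obtain ⟨h0, h1, h2, h3, h4⟩ := h
      refine ⟨⟨?_, ?_, ?_, ?_⟩, mem_insert_self _ _⟩
      · rw [Finset.min_insert, h1, ← WithTop.coe_min, min_eq_right hi.le]
      · intro x hx
        rcases mem_insert.1 hx with rfl | hx
        · omega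
        · have := h2 x hx; omega
      · rw [Finset.min_insert, h3, ← WithTop.coe_min, min_eq_left h0.le]
      · rw [card_insert_of_notMem, card_insert_of_notMem, h4]
        · exact fun h => lt_irrefl _ (h2 a h)
        · exact fun h => absurd (Finset.min_le_of_eq h h3) (not_le.2 h0)
    · rintro ⟨c, I, J⟩ h ⟨c', I', J'⟩ h' heq
      simp only [pathPairs, mem_sigma, mem_filter, mem_univ, true_and] at h h'
      obtain ⟨h0, h1, h2, h3, h4⟩ := h
      obtain ⟨h0', h1', h2', h3', h4'⟩ := h'
      simp only [Prod.mk.injEq] at heq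
      obtain ⟨e1, e2⟩ := heq
      have hI : I = I' := by
        rw [← erase_insert (a := a) (s := I) (fun h => lt_irrefl _ (h2 a h)), e1,
          erase_insert (fun h => lt_irrefl _ (h2' a h))]
      have hJ : J = J' := by
        rw [← erase_insert (a := j) (s := J)
            (fun h => absurd (Finset.min_le_of_eq h h3) (not_le.2 h0)), e2,
          erase_insert (fun h => absurd (Finset.min_le_of_eq h h3') (not_le.2 h0'))]
      subst hI hJ
      have : c = c' := WithTop.coe_injective (h3.symm.trans h3')
      subst this
      rfl
    · rintro ⟨I, J⟩ h
      simp only [pathPairs, mem_filter, mem_univ, true_and] at h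
      obtain ⟨⟨h1, h2, h3, h4⟩, h5⟩ := h
      have hj : j ∈ J := Finset.mem_of_min h3
      have hii : i ∈ I := Finset.mem_of_min h1
      have hcard : (J.erase j).card = (I.erase a).card := by
        rw [card_erase_of_mem hj, card_erase_of_mem h5, h4]
      have hiI : i ∈ I.erase a := mem_erase.2 ⟨hi.ne, hii⟩
      have hne : (J.erase j).Nonempty := by
        rw [← card_pos, hcard, card_pos]; exact ⟨i, hiI⟩
      have hmin : (J.erase j).min = ((J.erase j).min' hne : WithTop (Fin n)) :=
        (Finset.coe_min' hne).symm
      refine ⟨⟨(J.erase j).min' hne, (I.erase a, J.erase j)⟩, ?_, ?_⟩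
      · simp only [pathPairs, mem_sigma, mem_filter, mem_univ, true_and]
        have hm := mem_erase.1 ((J.erase j).min'_mem hne)
        refine ⟨lt_of_le_of_ne (Finset.min_le_of_eq hm.2 h3) hm.1.symm, ?_, ?_, hmin, hcard⟩
        · refine le_antisymm (Finset.min_le hiI) ?_
          rw [← h1]
          exact Finset.min_mono (erase_subset _ _)
        · intro x hx
          obtain ⟨hx1, hx2⟩ := mem_erase.1 hx
          have := h2 x hx2
          have : (x : ℕ) ≠ a := fun h => hx1 (Fin.ext h)
          omega
      · simp only [insert_erase hj, insert_erase h5]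
    · rintro ⟨c, I, J⟩ h
      simp only [pathPairs, mem_sigma, mem_filter, mem_univ, true_and] at h
      obtain ⟨h0, h1, h2, h3, h4⟩ := h
      rw [gammaWeight_insert T I J a j c ⟨i, Finset.mem_of_min h1⟩ h3 h4 (fun x hx => h2 x hx) h0]
      ring

/-! ### Rotation by a half-turn -/

/-- The matrix `A` rotated by a half-turn, as an infinite matrix padded with ones. The padding
keeps every entry of a positive scaffolding positive. -/
noncomputable def revExt {m n : ℕ} (A : Matrix (Fin m) (Fin n) ℝ) (a b : ℕ) : ℝ :=
  if h : a < m ∧ b < n then A ⟨m - 1 - a, by omega⟩ ⟨n - 1 - b, by omega⟩ else 1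

theorem revExt_pos {m n : ℕ} {A : Matrix (Fin m) (Fin n) ℝ} (hA : EntrywisePos A)
    (a b : ℕ) : 0 < revExt A a b := by
  unfold revExt
  split_ifs
  · exact hA _ _
  · exact one_pos

theorem starRow_congr {v w t : ℕ → ℝ} {j : ℕ} (h : ∀ c ≤ j, v c = w c) :
    starRow v t j = starRow w t j :=
  Finset.sum_congr rfl fun c hc => by rw [h c (Nat.lt_succ_iff.1 (mem_range.1 hc))]

theorem pushRows_congr {v w : ℕ → ℝ} (p : ℕ) : ∀ (U : ℕ → ℕ → ℝ) {j : ℕ}, (∀ c ≤ j, v c = w c) →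
    pushRows U p v j = pushRows U p w j := by
  induction p with
  | zero => intro U j h; exact h j le_rfl
  | succ p ih =>
    intro U j h
    exact starRow_congr fun c hc => ih _ fun d hd => h d (hd.trans hc)

theorem pushRows_add (p q : ℕ) (v : ℕ → ℝ) : ∀ U : ℕ → ℕ → ℝ,
    pushRows U (p + q) v = pushRows U p (pushRows (fun i => U (p + i)) q v) := by
  induction p with
  | zero => intro U; simp [pushRows]
  | succ p ih =>
    intro U
    rw [show p + 1 + q = p + q + 1 by omega]
    show starRow (pushRows (fun i => U (i + 1)) (p + q) v) (U 0) = starRow _ (U 0)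
    rw [ih]
    congr 3
    funext i
    rw [show p + i + 1 = p + 1 + i by omega]

/-- Reindexing of a sum over the columns to the right of `j` by the half-turn. -/
theorem sum_ge_eq_sum_range {n : ℕ} (F : ℕ → ℝ) (j : Fin n) :
    ∑ l ∈ univ.filter (fun l : Fin n => j ≤ l), F (n - 1 - l) =
      ∑ i ∈ range (n - 1 - j + 1), F i := by
  have hj := j.isLt
  refine Finset.sum_bij (fun l _ => n - 1 - (l : ℕ)) ?_ ?_ ?_ ?_
  · intro l hl
    have : (j : ℕ) ≤ l := by simpa using hl
    simp only [mem_range]; omega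
  · intro l _ l' _ h
    have := l.isLt; have := l'.isLt
    ext; omega
  · intro i hi
    simp only [mem_range] at hi
    refine ⟨⟨n - 1 - i, by omega⟩, ?_, ?_⟩
    · exact mem_filter.2 ⟨mem_univ _, show (j : ℕ) ≤ n - 1 - i by omega⟩
    · simp only; omega
  · intro l _; rfl

theorem sum_le_eq_sum_range {n : ℕ} (F : ℕ → ℝ) (j : Fin n) :
    ∑ l ∈ univ.filter (fun l : Fin n => l ≤ j), F l = ∑ i ∈ range (j + 1), F i := by
  have hj := j.isLt
  refine Finset.sum_bij (fun l _ => (l : ℕ)) ?_ ?_ ?_ ?_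
  · intro l hl
    have : (l : ℕ) ≤ j := by simpa using hl
    simp only [mem_range]; omega
  · intro l _ l' _ h
    exact Fin.ext h
  · intro i hi
    simp only [mem_range] at hi
    exact ⟨⟨i, by omega⟩, mem_filter.2 ⟨mem_univ _, show i ≤ (j : ℕ) by omega⟩, rfl⟩
  · intro l _; rfl

/-- The Γ-path-sum matrix, read after a half-turn, is given by the row recursion `pushRows`. -/
theorem XGamma_eq_pushRows {m n : ℕ} (T : Matrix (Fin m) (Fin n) ℝ) (hT : EntrywisePos T)
    (i : Fin m) (j : Fin n) :
    XGamma T i j = pushRows (revExt T) (m - 1 - i) (revExt T (m - 1 - i)) (n - 1 - j) := by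
  set f : ℕ → ℕ → ℝ := fun a y => if h : y < n then
    partialSum T a i ⟨n - 1 - y, by omega⟩ else 0 with hf
  have key : ∀ b a : ℕ, a + b = m → (i : ℕ) < a →
      XGamma T i j = pushRows (revExt T) b (f a) (n - 1 - j) := by
    intro b
    induction b with
    | zero =>
      intro a ha _
      have hj := j.isLt
      have : (⟨n - 1 - (n - 1 - (j : ℕ)), by omega⟩ : Fin n) = j := by ext; simp only; omega
      obtain rfl : a = m := ha
      simp only [pushRows, hf]
      rw [dif_pos (by omega), this, XGamma_eq_partialSum]
    | succ b ih =>
      intro a ha hia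
      rw [ih (a + 1) (by omega) (by omega), pushRows_add b 1]
      refine pushRows_congr _ _ fun y hy => ?_
      have hyn : y < n := by have := j.isLt; omega
      have ham : a < m := by omega
      show f (a + 1) y = ∑ c ∈ range (y + 1), f a c * (revExt T (b + 0) y / revExt T (b + 0) c)
      have h1 := partialSum_succ T hT ⟨a, ham⟩ i hia ⟨n - 1 - y, by omega⟩
      simp only at h1
      simp only [hf]
      rw [dif_pos hyn, h1]
      have h2 := sum_ge_eq_sum_range (fun c => f a c * (revExt T (b + 0) y / revExt T (b + 0) c))
        (⟨n - 1 - y, by omega⟩ : Fin n)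
      simp only [show n - 1 - (n - 1 - y) = y by omega] at h2
      rw [← h2]
      refine Finset.sum_congr rfl fun c _ => ?_
      have hc := c.isLt
      have hrow : (⟨m - 1 - (b + 0), by omega⟩ : Fin m) = ⟨a, ham⟩ := by ext; simp only; omega
      have hcol : (⟨n - 1 - (n - 1 - (c : ℕ)), by omega⟩ : Fin n) = c := by ext; simp only; omega
      simp only [hf, revExt]
      rw [dif_pos (by omega), dif_pos (by omega), dif_pos (by omega), hrow, hcol]
  have hi := i.isLt
  rw [key (m - 1 - i) (i + 1) (by omega) (by omega)]
  refine pushRows_congr _ _ fun y hy => ?_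
  have hyn : y < n := by have := j.isLt; omega
  have hrow : (⟨m - 1 - (m - 1 - (i : ℕ)), by omega⟩ : Fin m) = i := by ext; simp only; omega
  simp only [hf, revExt]
  rw [dif_pos hyn, dif_pos (by omega), hrow, partialSum_self]

/-- In one-based indexing `(k, j + 1)` is the zero-based corner `(k - 1, j)`; `X` is not rotated
here. -/
theorem borderMinorBR_eq {k n : ℕ} (hk : 1 ≤ k) (X : Matrix (Fin k) (Fin n) ℝ) (A : ℕ → ℕ → ℝ)
    (hXA : ∀ i j, X i j = A i j) (i j : Fin n) (hij : i ≤ j) :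
    borderMinorBR X (k - 1) i k (j + 1) = brMinor A (k - 1) i j := by
  have hij' : (i : ℕ) ≤ j := hij
  have hj := j.isLt
  unfold borderMinorBR
  rw [dif_pos (by omega)]
  by_cases h : 1 ≤ k - 1 ∧ 1 ≤ (i : ℕ)
  · rw [dif_pos (by omega)]
    unfold brMinor
    have hq : min (k - 1 - 1) ((i : ℕ) - 1) + 2 = min (k - 1) i + 1 := by omega
    unfold solidMinor
    rw [← Matrix.det_submatrix_equiv_self (finCongr hq.symm)]
    congr 1
    ext a b
    have ha := a.isLt
    have hb := b.isLt
    simp only [Matrix.submatrix_apply, Matrix.of_apply, finCongr_apply, Fin.val_cast, hXA]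
    congr 1
    · split_ifs <;> simp only <;> omega
    · split_ifs <;> simp only <;> omega
  · rw [dif_neg (by omega), hXA]
    have hq : min (k - 1) (i : ℕ) = 0 := by omega
    unfold brMinor
    rw [hq]
    simp [solidMinor]

/-- A half-turn exchanges top left and bottom right bordered minors, so that a minor bordered at
row `k + 1` becomes a `brMinor` of the rotated matrix with bottom row `m - k - 1`. -/
theorem borderMinorTL_eq {m n k : ℕ} (hk : k < m) (X : Matrix (Fin m) (Fin n) ℝ) (A : ℕ → ℕ → ℝ)
    (hXA : ∀ i j, X i j = A (m - 1 - i) (n - 1 - j)) (j l : Fin n) (hjl : j ≤ l) :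
    borderMinorTL X (k + 1) (j + 1) (k + 2) (l + 2) =
      brMinor A (m - k - 1) (n - 1 - l) (n - 1 - j) := by
  have hjl' : (j : ℕ) ≤ l := hjl
  have hl := l.isLt
  unfold borderMinorTL
  rw [dif_pos (by omega)]
  by_cases h : k + 2 ≤ m ∧ (l : ℕ) + 2 ≤ n
  · rw [dif_pos (by omega)]
    unfold brMinor
    have hq : min (m - (k + 2)) (n - ((l : ℕ) + 2)) + 2 = min (m - k - 1) (n - 1 - l) + 1 := by
      omega
    unfold solidMinor
    rw [← Matrix.det_submatrix_equiv_self (Fin.revPerm.trans (finCongr hq.symm))]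
    congr 1
    ext a b
    have ha := a.isLt
    have hb := b.isLt
    simp only [Matrix.submatrix_apply, Matrix.of_apply, Equiv.trans_apply, Fin.revPerm_apply,
      finCongr_apply, Fin.val_cast, Fin.val_rev, hXA]
    congr 1
    · split_ifs <;> simp only <;> omega
    · split_ifs <;> simp only <;> omega
  · rw [dif_neg (by omega), hXA]
    have hq : min (m - k - 1) (n - 1 - (l : ℕ)) = 0 := by omega
    unfold brMinor
    rw [hq]
    simp only [solidMinor]
    simp
    rw [Nat.sub_right_comm]

/-! ### Row insertion -/

/-- sufficiency of the linear system for row insertion.  Any strongly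
positive solution `(r, q, s)` of equations (A) and (B) produces, via the common value of
(A), a row whose insertion between rows `k` and `k+1` of `X` keeps total positivity. -/
theorem row_insertion_sufficient {m n : ℕ} (X : Matrix (Fin m) (Fin n) ℝ)
    (hX : TotallyPositive X) (k : ℕ) (hk1 : 1 ≤ k) (hk2 : k ≤ m - 1)
    (T : Matrix (Fin m) (Fin n) ℝ) (hTpos : EntrywisePos T) (hTX : XGamma T = X)
    (Xhat : Matrix (Fin k) (Fin n) ℝ)
    (hXhat : Xhat = XGamma (Matrix.of fun (a : Fin k) (b : Fin n) =>
      T ⟨(a : ℕ), by have := a.isLt; omega⟩ b))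
    (r q s : Fin n → ℝ)
    (hr : ∀ b, 0 < r b) (hq : ∀ b, 0 < q b) (hs : ∀ b, 0 < s b)
    (hA : ∀ j : Fin n,
      (∑ l ∈ Finset.univ.filter (fun l : Fin n => j ≤ l),
          borderMinorTL X (k + 1) ((j : ℕ) + 1) (k + 2) ((l : ℕ) + 2) /
              borderMinorTL X (k + 1) ((l : ℕ) + 1) (k + 2) ((l : ℕ) + 2) * r l)
        = ∑ i ∈ Finset.univ.filter (fun i : Fin n => i ≤ j),
            borderMinorBR X (k - 1) (i : ℕ) k ((j : ℕ) + 1) /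
                borderMinorBR X (k - 1) (i : ℕ) k ((i : ℕ) + 1) * q i)
    (hB : ∀ j : Fin n,
      r j = ∑ i ∈ Finset.univ.filter (fun i : Fin n => i ≤ j),
          borderMinorBR Xhat (k - 1) (i : ℕ) k ((j : ℕ) + 1) /
              borderMinorBR Xhat (k - 1) (i : ℕ) k ((i : ℕ) + 1) * s i) :
    TotallyPositive (Matrix.of fun (a : Fin (m + 1)) (b : Fin n) =>
      if ha : (a : ℕ) < k then X ⟨(a : ℕ), by have := a.isLt; omega⟩ b
      else if (a : ℕ) = k then
        ∑ l ∈ Finset.univ.filter (fun l : Fin n => b ≤ l),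
          borderMinorTL X (k + 1) ((b : ℕ) + 1) (k + 2) ((l : ℕ) + 2) /
              borderMinorTL X (k + 1) ((l : ℕ) + 1) (k + 2) ((l : ℕ) + 2) * r l
      else X ⟨(a : ℕ) - 1, by have := a.isLt; omega⟩ b) := by
  have hkm : k < m := by omega
  set U : ℕ → ℕ → ℝ := revExt T with hU_def
  have hU : ∀ i j, 0 < U i j := revExt_pos hTpos
  set XR : ℕ → ℕ → ℝ := fun a => pushRows U a (U a) with hXR_def
  have hXR : ∀ i j, X i j = XR (m - 1 - i) (n - 1 - j) := fun i j => by
    rw [← hTX, XGamma_eq_pushRows T hTpos]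
  -- After the half-turn the first `k` rows of `T` become the rows `U (m - k), U (m - k + 1), …`.
  set Uh : ℕ → ℕ → ℝ := fun a => U (m - k + a) with hUh_def
  have hUhpos : ∀ i j, 0 < Uh i j := fun i j => hU _ _
  set XhR : ℕ → ℕ → ℝ := fun a => pushRows Uh a (Uh a) with hXhR_def
  have hXh : ∀ i j, Xhat i j = XhR (k - 1 - i) (n - 1 - j) := fun i j => by
    have hrev : revExt (Matrix.of fun (a : Fin k) (b : Fin n) =>
        T ⟨(a : ℕ), by have := a.isLt; omega⟩ b) = Uh := by
      funext a b
      simp only [hUh_def, hU_def, revExt, Matrix.of_apply]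
      by_cases h : a < k ∧ b < n
      · rw [dif_pos h, dif_pos (by omega)]
        congr 1
        ext; simp only; omega
      · rw [dif_neg h, dif_neg (by omega)]
    rw [hXhat, XGamma_eq_pushRows (Matrix.of fun (a : Fin k) (b : Fin n) =>
        T ⟨(a : ℕ), by have := a.isLt; omega⟩ b) (fun a b => hTpos _ _), hrev]
  -- Rotating back: `A` is `Xhat` as an infinite matrix.
  set A : ℕ → ℕ → ℝ := fun i j => XhR (k - 1 - i) (n - 1 - j) with hA_def
  have hATP : TPBlock k n A := (TPBlock.scaffold k Uh hUhpos).rev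
  set sN : ℕ → ℝ := fun i => if h : i < n then s ⟨i, h⟩ else 1 with hsN
  set rN : ℕ → ℝ := fun i => if h : i < n then r ⟨i, h⟩ else 1 with hrN
  have hsNpos : ∀ i, 0 < sN i := fun i => by
    simp only [hsN]
    split_ifs
    · exact hs _
    · exact one_pos
  -- Equation (B) says that `r` is the row obtained by appending `s` to the scaffolding of `Xhat`.
  have hW : TPBlock (k + 1) n (fun i => if i < k then A i else rN) := by
    have hk' : k - 1 + 1 = k := by omega
    have h0 := TPBlock.append (k := k - 1) (n := n) (A := A) (by rwa [hk']) sN rN hsNpos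
      (fun j hj => by
        have h1 := hB ⟨j, hj⟩
        have h2 := sum_le_eq_sum_range
          (fun i => brMinor A (k - 1) i j / brMinor A (k - 1) i i * sN i) ⟨j, hj⟩
        simp only at h2
        rw [← h2]
        simp only [hrN, dif_pos hj, h1]
        refine Finset.sum_congr rfl fun i hi => ?_
        have hi' : i ≤ ⟨j, hj⟩ := by simpa using hi
        rw [borderMinorBR_eq hk1 Xhat A hXh i ⟨j, hj⟩ hi',
          borderMinorBR_eq hk1 Xhat A hXh i i le_rfl]
        simp [hsN])
    rwa [show k - 1 + 2 = k + 1 by omega, hk'] at h0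
  -- Rotated, `Xhat` with `r` appended has `r` as its top row. Placing the scaffolding rows of `T`
  -- below row `k` on top of it pushes every row through them; the result is the rotated matrix
  -- of the theorem.
  have hY := ((hW.rev).extend (m - k) U hU).rev
  rw [show m - k + (k + 1) = m + 1 by omega] at hY
  intro ρ f g hf hg
  have hdet := hY ρ (fun x => f x) (fun x => g x) hf hg (fun x => (f x).isLt) (fun x => (g x).isLt)
  convert hdet using 2
  ext x y
  simp only [Matrix.submatrix_apply, Matrix.of_apply]
  generalize f x = a
  generalize g y = b
  have ha := a.isLt
  have hb := b.isLt
  rw [Nat.add_sub_cancel, Nat.add_sub_cancel]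
  -- Rows above the inserted one come from `Xhat`, the inserted row from `r`, the others from the
  -- lower scaffolding rows alone.
  rcases lt_trichotomy (a : ℕ) k with hak | hak | hak
  · rw [dif_pos hak, if_neg (by omega), hXR]
    have e1 : m - 1 - (a : ℕ) = m - k + (k - 1 - a) := by omega
    simp only [hXR_def]
    rw [e1, pushRows_add]
    refine pushRows_congr _ _ fun c hc => ?_
    have e2 : k - (m - (a : ℕ) - (m - k)) = a := by omega
    have e3 : n - 1 - (n - 1 - c) = c := by omega
    rw [e2, if_pos hak]
    simp only [hA_def, e3]
    rfl
  · rw [dif_neg (by omega), if_pos hak, if_neg (by omega)]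
    obtain ⟨p, hp⟩ : ∃ p, m - k = p + 1 := ⟨m - k - 1, by omega⟩
    have hp' : m - k - 1 = p := by omega
    rw [hp, (pushRows_eq_sum_brMinor p U hU).2, ← sum_ge_eq_sum_range (fun i =>
      brMinor (fun i => pushRows U i (U i)) p i (n - 1 - b) /
        brMinor (fun i => pushRows U i (U i)) p i i * _)]
    refine Finset.sum_congr rfl fun l hl => ?_
    have hl' : b ≤ l := by simpa using hl
    have hln := l.isLt
    rw [borderMinorTL_eq hkm X XR hXR b l hl', borderMinorTL_eq hkm X XR hXR l l le_rfl, hp',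
      if_neg (by omega)]
    have e3 : n - 1 - (n - 1 - (l : ℕ)) = l := by omega
    rw [e3]
    simp [hrN, hXR_def]
  · rw [dif_neg (by omega), if_neg (by omega), if_pos (by omega), hXR]
    simp only [hXR_def]
    rw [show m - 1 - ((a : ℕ) - 1) = m - a by omega]
end

section
/- Line insertion is always possible in a totally positive matrix: if X is an m×n totally positive real matrix and 1 ≤ k ≤ m−1, then there exists a row vector v ∈ ℝⁿ such that the (m+1)×n matrix whose rows 1, …, k are rows 1, …, k of X, whose row k+1 is v, and whose rows k+2, …, m+1 are rows k+1, …, m of X, is totally positive. -/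
/-!
The new row is a linear combination `v = ∑ j, t ^ p j • w j` of suitable rows `w j`, with `t` large.
A minor through the new row is linear in that row, hence a polynomial in `t`; it is positive for
large `t` as soon as its dominant coefficient, the same minor with `v` replaced by a single `w j`,
is positive. There are only finitely many minors, so one `t` works for all of them
(`exists_update_rowsPos`).

* Appending a last row: take `w j` the unit vectors and `p j = j`. The dominant coefficient of the
  minor with columns `g` is the minor obtained by deleting the last row and the last column of `g`.
  Hence one may assume that at least `n` rows lie below the place of insertion.
* Inserting before row `k` (0-based), when rows `k, …, k + n - 1` exist: take
  `w j = (-1) ^ j • (row k + j)` and `p j = n - j`. A minor through the new row uses at most `n - 1`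
  old rows, so some row `k + j` is not among them; let `j` be minimal. For `i < j` the `i`-th
  coefficient has a repeated row and vanishes. In the `j`-th one, sorting the rows moves row `k + j`
  past the rows `k, …, k + j - 1`, all of which are present; this costs the sign `(-1) ^ j`, so the
  coefficient is a minor of the original matrix.

The rows of an extended matrix beyond the original ones are discarded at the end.
-/

open Finset

/-! ### Dominant terms and replacing a row -/

/-- The first `M` rows of `Y` form a totally positive matrix. Rows are indexed by `ℕ`, so that rows
can be appended and shifted without changing types; rows from `M` on are irrelevant. -/
def RowsPos {n : ℕ} (Y : ℕ → Fin n → ℝ) (M : ℕ) : Prop :=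
  ∀ (r : ℕ) (f : Fin r → ℕ) (g : Fin r → Fin n), StrictMono f → StrictMono g →
    (∀ c, f c < M) → 0 < (Matrix.of fun a b => Y (f a) (g b)).det

lemma eventually_sum_pow_pos {s : ℕ} (c : Fin s → ℝ) (p : Fin s → ℕ) (j₀ : Fin s) (h0 : 0 < c j₀)
    (h : ∀ j, j ≠ j₀ → c j = 0 ∨ p j < p j₀) :
    ∀ᶠ t : ℝ in Filter.atTop, 0 < ∑ j, t ^ p j * c j := by
  have key : Filter.Tendsto (fun t : ℝ => ∑ j, (t ^ p j / t ^ p j₀) * c j) Filter.atTop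
      (nhds (∑ j, if j = j₀ then c j₀ else 0)) := by
    refine tendsto_finsetSum _ fun j _ => ?_
    by_cases hj : j = j₀
    · subst hj
      simp only [if_true]
      refine tendsto_const_nhds.congr' ?_
      filter_upwards [Filter.eventually_gt_atTop 0] with t ht
      rw [div_self (by positivity), one_mul]
    · rw [if_neg hj]
      rcases h j hj with hc | hp
      · simp [hc]
      · simpa using (tendsto_pow_div_pow_atTop_zero (𝕜 := ℝ) hp).mul_const (c j)
  rw [Finset.sum_ite_eq' Finset.univ j₀, if_pos (Finset.mem_univ _)] at key
  filter_upwards [key.eventually (lt_mem_nhds h0), Filter.eventually_gt_atTop 0] with t ht ht0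
  have h2 : ∑ j, t ^ p j * c j = t ^ p j₀ * ∑ j, (t ^ p j / t ^ p j₀) * c j := by
    rw [Finset.mul_sum]
    refine Finset.sum_congr rfl fun j _ => ?_
    field_simp
  rw [h2]
  positivity

lemma det_update_row_sum {n r s : ℕ} (B : ℕ → Fin n → ℝ) (q : ℕ) (w : Fin s → Fin n → ℝ)
    (d : Fin s → ℝ) (f : Fin r → ℕ) (hf : StrictMono f) (g : Fin r → Fin n) (a : Fin r)
    (ha : f a = q) :
    (Matrix.of fun x y => Function.update B q (∑ j, d j • w j) (f x) (g y)).det =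
      ∑ j, d j * (Matrix.of fun x y => Function.update B q (w j) (f x) (g y)).det := by
  have key : ∀ v : Fin n → ℝ, (Matrix.of fun x y => Function.update B q v (f x) (g y)).det =
      Matrix.cramer (Matrix.of fun x y => B (f x) (g y)).transpose (fun y => v (g y)) a := by
    intro v
    rw [Matrix.cramer_transpose_apply]
    congr 1
    ext x y
    by_cases hx : x = a
    · subst hx; simp [ha]
    · have : f x ≠ q := fun h => hx (hf.injective (h.trans ha.symm))
      simp [Matrix.updateRow_ne hx, Function.update_of_ne this]
  simp only [key]
  have : (fun y => (∑ j, d j • w j) (g y)) = ∑ j, d j • (fun y => w j (g y)) := by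
    ext y; simp
  rw [this, map_sum]
  simp

/-- Row `q` of `B` can be replaced so that the first `M` rows become totally positive, provided each
minor through row `q` has, among the candidate rows `w j`, a dominant one which makes it positive;
dominance is measured by the exponents `p j`. -/
lemma exists_update_rowsPos {n s M : ℕ} (B : ℕ → Fin n → ℝ) (q : ℕ) (w : Fin s → Fin n → ℝ)
    (p : Fin s → ℕ)
    (h0 : ∀ (r : ℕ) (f : Fin r → ℕ) (g : Fin r → Fin n), StrictMono f → StrictMono g →
      (∀ c, f c < M) → (∀ c, f c ≠ q) → 0 < (Matrix.of fun a b => B (f a) (g b)).det)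
    (h1 : ∀ (r : ℕ) (f : Fin r → ℕ) (g : Fin r → Fin n), StrictMono f → StrictMono g →
      (∀ c, f c < M) → ∀ a, f a = q → ∃ j₀,
        0 < (Matrix.of fun x y => Function.update B q (w j₀) (f x) (g y)).det ∧
        ∀ j, j ≠ j₀ → (Matrix.of fun x y => Function.update B q (w j) (f x) (g y)).det = 0 ∨
          p j < p j₀) :
    ∃ v, RowsPos (Function.update B q v) M := by
  have ev : ∀ᶠ t : ℝ in Filter.atTop, ∀ r ∈ Finset.range (n + 1), ∀ (f : Fin r → Fin M)
      (g : Fin r → Fin n), StrictMono f → StrictMono g → 0 < (Matrix.of fun x y =>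
        Function.update B q (∑ j, t ^ p j • w j) (f x : ℕ) (g y)).det := by
    rw [Filter.eventually_all_finset]
    intro r _
    rw [Filter.eventually_all]
    intro f
    rw [Filter.eventually_all]
    intro g
    rw [Filter.eventually_imp_distrib_left]
    intro hf
    rw [Filter.eventually_imp_distrib_left]
    intro hg
    have hf' : StrictMono (fun c => (f c : ℕ)) := fun _ _ h => hf h
    by_cases hq : ∃ a, (f a : ℕ) = q
    · obtain ⟨a, ha⟩ := hq
      obtain ⟨j₀, hp, hj⟩ := h1 r _ g hf' hg (fun c => (f c).isLt) a ha
      filter_upwards [eventually_sum_pow_pos _ p j₀ hp hj] with t ht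
      rwa [det_update_row_sum B q w _ _ hf' g a ha]
    · push Not at hq
      refine Filter.Eventually.of_forall fun t => ?_
      simpa [Function.update_of_ne (hq _)] using h0 r _ g hf' hg (fun c => (f c).isLt) hq
  obtain ⟨t, ht⟩ := ev.exists
  refine ⟨∑ j, t ^ p j • w j, fun r f g hf hg hM => ?_⟩
  have hr : r ≤ n := by simpa using Fintype.card_le_of_injective g hg.injective
  exact ht r (by simpa using Nat.lt_succ_of_le hr) (fun c => ⟨f c, hM c⟩) g (fun _ _ h => hf h) hg

/-! ### Appending a last row -/

lemma exists_append_row {n M : ℕ} (Y : ℕ → Fin n → ℝ) (hY : RowsPos Y M) :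
    ∃ v, RowsPos (Function.update Y M v) (M + 1) := by
  refine exists_update_rowsPos Y M (fun j : Fin n => Pi.single j 1) (fun j => j) ?_ ?_
  · intro r f g hf hg hM hq
    exact hY r f g hf hg fun c => lt_of_le_of_ne (Nat.lt_succ_iff.1 (hM c)) (hq c)
  · intro r f g hf hg hM a ha
    obtain _ | r := r
    · exact a.elim0
    have hlast : a = Fin.last r := by
      by_contra h
      have h2 := hf (Fin.lt_last_iff_ne_last.2 h)
      have := hM (Fin.last r)
      omega
    subst hlast
    have hlt : ∀ c : Fin r, f c.castSucc < M := fun c => ha ▸ hf (Fin.castSucc_lt_last c)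
    refine ⟨g (Fin.last r), ?_, fun j hj => ?_⟩
    · rw [Matrix.det_succ_row _ (Fin.last r), Fin.sum_univ_castSucc, Finset.sum_eq_zero]
      · have := hY r (fun c => f c.castSucc) (fun c => g c.castSucc)
          (hf.comp Fin.strictMono_castSucc) (hg.comp Fin.strictMono_castSucc) hlt
        simpa [ha, ← two_mul, Matrix.submatrix, Function.update_of_ne (hlt _).ne] using this
      · intro c _
        have : g c.castSucc ≠ g (Fin.last r) := (hg (Fin.castSucc_lt_last c)).ne
        simp [ha, this]
    · by_cases hj2 : j < g (Fin.last r)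
      · exact Or.inr hj2
      · refine Or.inl (Matrix.det_eq_zero_of_row_eq_zero (Fin.last r) fun y => ?_)
        have : g y ≠ j := by
          have h3 : g y ≤ g (Fin.last r) := hg.monotone (Fin.le_last y)
          intro h
          exact hj (le_antisymm (h ▸ h3) (not_lt.1 hj2))
        simp [ha, this]

lemma exists_extend {n M : ℕ} (Y : ℕ → Fin n → ℝ) (hY : RowsPos Y M) (N : ℕ) :
    ∃ Z : ℕ → Fin n → ℝ, (∀ a < M, Z a = Y a) ∧ RowsPos Z (M + N) := by
  induction N with
  | zero => exact ⟨Y, fun _ _ => rfl, hY⟩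
  | succ N ih =>
    obtain ⟨Z, hZ, hp⟩ := ih
    obtain ⟨v, hv⟩ := exists_append_row Z hp
    refine ⟨_, fun a ha => ?_, hv⟩
    rw [Function.update_of_ne (by omega), hZ a ha]

/-! ### Inserting a row far from the bottom -/

lemma det_insertNth {n r : ℕ} (a : Fin (r + 1)) (w : Fin n → ℝ) (R : Fin r → Fin n → ℝ)
    (g : Fin (r + 1) → Fin n) :
    (Matrix.of fun x y => (a.insertNth w R : Fin (r + 1) → Fin n → ℝ) x (g y)).det =
      (-1) ^ (a : ℕ) *
        (Matrix.of fun x y => (Fin.cons w R : Fin (r + 1) → Fin n → ℝ) x (g y)).det := by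
  rw [Matrix.det_succ_row _ a, Matrix.det_succ_row _ 0, Finset.mul_sum]
  refine Finset.sum_congr rfl fun b _ => ?_
  simp [Matrix.submatrix, pow_add, mul_assoc]

/-- If `h` is strictly increasing, exactly `a` of its values lie below `k`, and all of
`k, …, k + s - 1` are values of `h`, then exactly `a + s` values of `h` lie below `k + s`. -/
lemma lt_add_iff {r : ℕ} (h : Fin r → ℕ) (hh : StrictMono h) (k a : ℕ) (har : a ≤ r)
    (ha : ∀ c : Fin r, (c : ℕ) < a ↔ h c < k) (s : ℕ) (hs : ∀ i < s, ∃ c, h c = k + i) :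
    a + s ≤ r ∧ ∀ c : Fin r, (c : ℕ) < a + s ↔ h c < k + s := by
  induction s with
  | zero => exact ⟨har, ha⟩
  | succ s ih =>
    obtain ⟨_, ih⟩ := ih fun i hi => hs i (by omega)
    obtain ⟨c₀, hc⟩ := hs s (by omega)
    have e : (c₀ : ℕ) = a + s := by
      have h1 := ih c₀
      by_contra hne
      have hlt : a + s < c₀ := by omega
      have h2 := ih ⟨a + s, by omega⟩
      have h3 := hh (show (⟨a + s, by omega⟩ : Fin r) < c₀ from hlt)
      simp only at h2
      omega
    refine ⟨by omega, fun c => ?_⟩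
    have h1 := hh.le_iff_le (a := c) (b := c₀)
    rw [Fin.le_def] at h1
    omega

lemma exists_insert_row {n M : ℕ} (Y : ℕ → Fin n → ℝ) (hY : RowsPos Y M) (k : ℕ)
    (hk : k + n ≤ M) :
    ∃ v, RowsPos (Function.update (fun a => if a < k then Y a else Y (a - 1)) k v) (M + 1) := by
  set B : ℕ → Fin n → ℝ := fun a => if a < k then Y a else Y (a - 1) with hB
  -- `σ` is the old index of the row which `B` has at a given index other than `k`.
  set σ : ℕ → ℕ := fun a => if a < k then a else a - 1 with hσ
  have hBσ : ∀ a, B a = Y (σ a) := by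
    intro a; simp only [hB, hσ]; split_ifs <;> rfl
  have hσm : ∀ a b, a ≠ k → b ≠ k → a < b → σ a < σ b := by
    intro a b h1 h2 h3; simp only [hσ]; split_ifs <;> omega
  have hσM : ∀ a, a ≠ k → a < M + 1 → σ a < M := by
    intro a h1 h2; simp only [hσ]; split_ifs <;> omega
  have hσk : ∀ a, a ≠ k → (σ a < k ↔ a < k) := by
    intro a h1; simp only [hσ]; split_ifs <;> omega
  refine exists_update_rowsPos B k (fun j : Fin n => (-1 : ℝ) ^ (j : ℕ) • Y (k + j))
    (fun j => n - j) ?_ ?_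
  · intro r f g hf hg hM hq
    simp only [hBσ]
    exact hY r (fun c => σ (f c)) g (fun x y hxy => hσm _ _ (hq x) (hq y) (hf hxy)) hg
      fun c => hσM _ (hq c) (hM c)
  · intro r f g hf hg hM a ha
    obtain _ | r := r
    · exact a.elim0
    have hrn : r + 1 ≤ n := by simpa using Fintype.card_le_of_injective g hg.injective
    have hne : ∀ c, f (a.succAbove c) ≠ k := fun c h =>
      Fin.succAbove_ne a c (hf.injective (h.trans ha.symm))
    set h : Fin r → ℕ := fun c => σ (f (a.succAbove c)) with hh
    have hmono : StrictMono h := fun x y hxy =>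
      hσm _ _ (hne x) (hne y) (hf (Fin.strictMono_succAbove a hxy))
    have hlt : ∀ c : Fin r, (c : ℕ) < a ↔ h c < k := by
      intro c
      rw [hh, hσk _ (hne c), ← ha, hf.lt_iff_lt, Fin.succAbove_lt_iff_castSucc_lt]
      rfl
    have hdet : ∀ j : Fin n, (Matrix.of fun x y =>
        Function.update B k ((-1 : ℝ) ^ (j : ℕ) • Y (k + j)) (f x) (g y)).det =
        (-1) ^ (j : ℕ) * (Matrix.of fun x y =>
          (a.insertNth (Y (k + j)) (fun c => Y (h c)) : Fin (r + 1) → Fin n → ℝ) x (g y)).det := by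
      intro j
      have e := det_update_row_sum B k (fun _ : Fin 1 => Y (k + j)) (fun _ => (-1) ^ (j : ℕ)) f hf g
        a ha
      simp only [Finset.univ_unique, Finset.sum_singleton] at e
      rw [e]
      congr 2
      ext x y
      refine Fin.succAboveCases a ?_ (fun c => ?_) x
      · simp [ha]
      · simp [Function.update_of_ne (hne c), hBσ, hh]
    -- `h` takes only `r < n` values, so it misses one of `k, …, k + n - 1`.
    have hex : ∃ i, i < n ∧ ∀ c, h c ≠ k + i := by
      by_contra! hcon
      choose φ hφ using fun i : Fin n => hcon i i.isLt
      have : Function.Injective φ := fun x y hxy => by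
        have h1 := hφ x
        rw [hxy, hφ y] at h1
        exact Fin.ext (by omega)
      have := Fintype.card_le_of_injective φ this
      simp at this
      omega
    classical
    obtain ⟨hjn, hjh⟩ := Nat.find_spec hex
    have hmin : ∀ i < Nat.find hex, ∃ c, h c = k + i := by
      intro i hi
      have := Nat.find_min hex hi
      push Not at this
      exact this (by omega)
    set j₀ := Nat.find hex
    obtain ⟨hb, hbc⟩ := lt_add_iff h hmono k a (by omega) hlt j₀ hmin
    refine ⟨⟨j₀, hjn⟩, ?_, fun j hj => ?_⟩
    · have hsm : StrictMono ((⟨a + j₀, by omega⟩ : Fin (r + 1)).insertNth (k + j₀) h :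
          Fin (r + 1) → ℕ) := by
        rw [Fin.strictMono_insertNth_iff]
        refine ⟨hmono, fun c hc => (hbc c).1 hc, fun c hc => ?_⟩
        have h1 := hbc c
        have h2 := hjh c
        have h3 : a + j₀ ≤ c := hc
        omega
      have hpos := hY _ _ g hsm hg (by
        rw [Fin.forall_iff_succAbove ⟨a + j₀, by omega⟩]
        simp only [Fin.insertNth_apply_same, Fin.insertNth_apply_succAbove]
        exact ⟨by omega, fun c => hσM _ (hne c) (hM _)⟩)
      have e : (fun x y => Y (((⟨a + j₀, by omega⟩ : Fin (r + 1)).insertNth (k + j₀) h :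
          Fin (r + 1) → ℕ) x) (g y)) = fun x y => ((⟨a + j₀, by omega⟩ : Fin (r + 1)).insertNth
            (Y (k + j₀)) (fun c => Y (h c)) : Fin (r + 1) → Fin n → ℝ) x (g y) := by
        ext x y
        refine Fin.succAboveCases (⟨a + j₀, by omega⟩ : Fin (r + 1)) ?_ (fun c => ?_) x <;> simp
      rw [e, det_insertNth] at hpos
      rw [hdet, det_insertNth, ← mul_assoc, ← pow_add]
      simpa [add_comm] using hpos
    · by_cases hjr : ∃ c, h c = k + j
      · obtain ⟨c, hc⟩ := hjr
        left
        rw [hdet, Matrix.det_zero_of_row_eq (Fin.succAbove_ne a c).symm, mul_zero]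
        ext y
        simp [hc]
      · right
        have h1 : j₀ ≤ j := Nat.find_min' hex ⟨j.isLt, by push Not at hjr; exact hjr⟩
        have h2 : (j : ℕ) ≠ j₀ := fun e => hj (Fin.ext e)
        have := j.isLt
        simp only
        omega

/-! ### Line insertion -/

/-- a line can always be inserted between rows `k` and `k+1` of a totally
positive matrix while maintaining total positivity. -/
theorem line_insertion_exists {m n : ℕ} (X : Matrix (Fin m) (Fin n) ℝ)
    (hX : TotallyPositive X) (k : ℕ) (hk1 : 1 ≤ k) (hk2 : k ≤ m - 1) :
    ∃ v : Fin n → ℝ,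
      TotallyPositive (Matrix.of fun (a : Fin (m + 1)) (b : Fin n) =>
        if ha : (a : ℕ) < k then X ⟨(a : ℕ), by have := a.isLt; omega⟩ b
        else if (a : ℕ) = k then v b
        else X ⟨(a : ℕ) - 1, by have := a.isLt; omega⟩ b) := by
  set Y : ℕ → Fin n → ℝ := fun a b => if h : a < m then X ⟨a, h⟩ b else 0 with hYdef
  have hY : RowsPos Y m := by
    intro r f g hf hg hM
    have := hX r (fun c => ⟨f c, hM c⟩) g (fun _ _ h => hf h) hg
    simpa [hYdef, hM, Matrix.submatrix] using this
  obtain ⟨Z, hZ, hZp⟩ := exists_extend Y hY n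
  obtain ⟨v, hv⟩ := exists_insert_row Z hZp k (by omega)
  refine ⟨v, fun r f g hf hg => ?_⟩
  have := hv r (fun c => (f c : ℕ)) g (fun _ _ h => hf h) hg fun c => by omega
  convert this using 2
  ext x y
  have hx := (f x).isLt
  rcases lt_trichotomy (f x : ℕ) k with h | h | h
  · have hm : (f x : ℕ) < m := by omega
    simp [h, Function.update_of_ne h.ne, hZ _ hm, hYdef, hm]
  · simp [h]
  · have hm : (f x : ℕ) - 1 < m := by omega
    simp [h.not_gt, h.ne', hZ _ hm, hYdef, hm]
end
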